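/- arXiv:1111.4152 — 2 statements merged into one kernel-verified Lean document; each statement's English description precedes it below -/
import Mathlib

section
/- Let K be a field of characteristic different from 2 and let q₁, q₂, q₃ be covariants of binary octics over K, each of order 2, of degrees d₁, d₂, d₃ and weights 4d₁−1, 4d₂−1, 4d₃−1 respectively (the weight of a nonzero order-2 covariant of octics of degree d is necessarily 4d−1). Then for every binary octic f ∈ K[x,z] with f(−x,z) = f(x,z) — in particular for f = x⁸ + a·x⁶z² + b·x⁴z⁴ + c·x²z⁶ + z⁸, the normal model of genus-3 hyperelliptic curves whose automorphism group contains the dihedral group D₄ of order 4 — each q_i(f) is a scalar multiple of the monomial xz, and consequently R(q₁(f), q₂(f), q₃(f)) = 0. -/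
open MvPolynomial

/-- The action of a matrix `M` on binary forms: `(M.f)(x,z) = f(M⁻¹·(x,z))`. -/
noncomputable def matAct {K : Type*} [Field K] (M : Matrix (Fin 2) (Fin 2) K)
    (f : MvPolynomial (Fin 2) K) : MvPolynomial (Fin 2) K :=
  bind₁ (fun j : Fin 2 => C (M⁻¹ j 0) * X 0 + C (M⁻¹ j 1) * X 1) f

/-- Substitution of `M·(x,z)` for `(x,z)` in a binary form: `(subst M p)(x,z) = p(M·(x,z))`. -/
noncomputable def subst {K : Type*} [Field K] (M : Matrix (Fin 2) (Fin 2) K)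
    (p : MvPolynomial (Fin 2) K) : MvPolynomial (Fin 2) K :=
  bind₁ (fun j : Fin 2 => C (M j 0) * X 0 + C (M j 1) * X 1) p

/-- The determinant `R(q₁,q₂,q₃)` of three binary quadratic forms in the basis `x², xz, z²`. -/
noncomputable def Rdet {K : Type*} [CommRing K] (q₁ q₂ q₃ : MvPolynomial (Fin 2) K) : K :=
  Matrix.det
    !![coeff (Finsupp.single 0 2) q₁, coeff (Finsupp.single 0 1 + Finsupp.single 1 1) q₁,
         coeff (Finsupp.single 1 2) q₁;
       coeff (Finsupp.single 0 2) q₂, coeff (Finsupp.single 0 1 + Finsupp.single 1 1) q₂,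
         coeff (Finsupp.single 1 2) q₂;
       coeff (Finsupp.single 0 2) q₃, coeff (Finsupp.single 0 1 + Finsupp.single 1 1) q₃,
         coeff (Finsupp.single 1 2) q₃]

/-- A covariant of binary octics of degree `d` and order `2`, with weight `4d−1`:
`q` sends octics to quadratics, is homogeneous of degree `d` in the coefficients, and
satisfies `q(M.f)(M·(x,z)) = det(M)^{−(4d−1)}·q(f)(x,z)` for all `M ∈ GL₂(K)`. -/
structure OrderTwoCovariant (K : Type*) [Field K] (d : ℕ)
    (q : MvPolynomial (Fin 2) K → MvPolynomial (Fin 2) K) : Prop where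
  order : ∀ f : MvPolynomial (Fin 2) K, f.IsHomogeneous 8 → (q f).IsHomogeneous 2
  degree : ∀ (c : K) (f : MvPolynomial (Fin 2) K), f.IsHomogeneous 8 →
    q (C c * f) = C (c ^ d) * q f
  covariance : ∀ M : Matrix (Fin 2) (Fin 2) K, IsUnit M.det →
    ∀ f : MvPolynomial (Fin 2) K, f.IsHomogeneous 8 →
      subst M (q (matAct M f)) = C (M.det ^ (-(4 * (d : ℤ) - 1))) * q f

theorem quad_decomp {K : Type*} [Field K] (p : MvPolynomial (Fin 2) K) (hp : p.IsHomogeneous 2) :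
    ∃ a b c : K, p = C a * X 0 ^ 2 + C b * (X 0 * X 1) + C c * X 1 ^ 2 := by
  refine ⟨coeff (Finsupp.single 0 2) p, coeff (Finsupp.single 0 1 + Finsupp.single 1 1) p,
    coeff (Finsupp.single 1 2) p, ?_⟩
  have e : (X 0 * X 1 : MvPolynomial (Fin 2) K)
      = monomial (Finsupp.single 0 1 + Finsupp.single 1 1) 1 := by
    simp [X, monomial_mul]
  rw [e, X_pow_eq_monomial, X_pow_eq_monomial]
  ext m
  simp only [coeff_add, coeff_C_mul, coeff_monomial]
  have key : ∀ m' : Fin 2 →₀ ℕ, m' = m ↔ m' 0 = m 0 ∧ m' 1 = m 1 := by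
    intro m'
    rw [Finsupp.ext_iff, Fin.forall_fin_two]
  by_cases hm : m 0 + m 1 = 2
  · have h3 : (m 0 = 0 ∧ m 1 = 2) ∨ (m 0 = 1 ∧ m 1 = 1) ∨ (m 0 = 2 ∧ m 1 = 0) := by omega
    rcases h3 with ⟨h0, h1⟩ | ⟨h0, h1⟩ | ⟨h0, h1⟩
    · have : Finsupp.single 1 2 = m := (key _).2 (by simp [h0, h1])
      simp [key, h0, h1, this]
    · have : Finsupp.single 0 1 + Finsupp.single 1 1 = m := (key _).2 (by simp [h0, h1])
      simp [key, h0, h1, this]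
    · have : Finsupp.single 0 2 = m := (key _).2 (by simp [h0, h1])
      simp [key, h0, h1, this]
  · have h0 : coeff m p = 0 := by
      apply hp.coeff_eq_zero
      rwa [Finsupp.degree_eq_sum, Fin.sum_univ_two]
    rw [h0, if_neg, if_neg, if_neg]
    · simp
    all_goals
      rintro rfl
      simp at hm

theorem cov_scalar {K : Type*} [Field K] (hchar : (2 : K) ≠ 0) (d : ℕ)
    (q : MvPolynomial (Fin 2) K → MvPolynomial (Fin 2) K) (hq : OrderTwoCovariant K d q)
    (f : MvPolynomial (Fin 2) K) (hf : f.IsHomogeneous 8)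
    (hsym : bind₁ (fun j : Fin 2 => if j = 0 then -(X 0) else X 1) f = f) :
    ∃ c : K, q f = C c * (X 0 * X 1) := by
  have hdet : (!![-1, 0; 0, 1] : Matrix (Fin 2) (Fin 2) K).det = -1 := by
    simp [Matrix.det_fin_two]
  have hinv : (!![-1, 0; 0, 1] : Matrix (Fin 2) (Fin 2) K)⁻¹ = !![-1, 0; 0, 1] := by
    apply Matrix.inv_eq_right_inv
    ext i j
    fin_cases i <;> fin_cases j <;> simp [Matrix.mul_apply]
  have hact : matAct !![-1, 0; 0, 1] f = f := by
    unfold matAct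
    rw [hinv]
    convert hsym using 3
    ext1 j
    fin_cases j <;> simp
  have hc := hq.covariance !![-1, 0; 0, 1] (by rw [hdet]; simp) f hf
  have hpow : ((-1 : K)) ^ (-(4 * (d : ℤ) - 1)) = -1 :=
    Odd.neg_one_zpow ⟨-2 * d, by ring⟩
  rw [hact, hdet, hpow] at hc
  obtain ⟨a, b, c, h⟩ := quad_decomp (q f) (hq.order f hf)
  rw [h] at hc
  have h1 := congrArg (eval ![1, 0]) hc
  have h2 := congrArg (eval ![0, 1]) hc
  simp [subst] at h1 h2
  have ha : a = 0 := by
    have : 2 * a = 0 := by linear_combination h1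
    simpa [hchar] using this
  have hcc : c = 0 := by
    have : 2 * c = 0 := by linear_combination h2
    simpa [hchar] using this
  exact ⟨b, by rw [h, ha, hcc]; simp⟩

/-- If `q₁, q₂, q₃` are order-2 covariants of binary octics of degrees `d₁, d₂, d₃` (hence of
odd weights `4dᵢ−1`), then for every binary octic `f` with `f(−x,z) = f(x,z)` — in particular
for the normal model `x⁸+ax⁶+bx⁴+cx²+1` of curves whose automorphism group contains `D₄` —
each `qᵢ(f)` is a scalar multiple of `xz`, and consequently `R(q₁(f),q₂(f),q₃(f)) = 0`. -/
theorem statement11 {K : Type*} [Field K] (hchar : (2 : K) ≠ 0)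
    (d₁ d₂ d₃ : ℕ)
    (q₁ q₂ q₃ : MvPolynomial (Fin 2) K → MvPolynomial (Fin 2) K)
    (hq₁ : OrderTwoCovariant K d₁ q₁) (hq₂ : OrderTwoCovariant K d₂ q₂)
    (hq₃ : OrderTwoCovariant K d₃ q₃)
    (f : MvPolynomial (Fin 2) K) (hf : f.IsHomogeneous 8)
    (hsym : bind₁ (fun j : Fin 2 => if j = 0 then -(X 0) else X 1) f = f) :
    ((∃ c : K, q₁ f = C c * (X 0 * X 1)) ∧ (∃ c : K, q₂ f = C c * (X 0 * X 1)) ∧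
      (∃ c : K, q₃ f = C c * (X 0 * X 1))) ∧
      Rdet (q₁ f) (q₂ f) (q₃ f) = 0 := by
  have h1 := cov_scalar hchar d₁ q₁ hq₁ f hf hsym
  have h2 := cov_scalar hchar d₂ q₂ hq₂ f hf hsym
  have h3 := cov_scalar hchar d₃ q₃ hq₃ f hf hsym
  refine ⟨⟨h1, h2, h3⟩, ?_⟩
  have key : ∀ c : K, coeff (Finsupp.single 0 2) (C c * (X 0 * X 1) : MvPolynomial (Fin 2) K) = 0 := by
    intro c
    rw [coeff_C_mul, coeff_mul_X']
    simp
  obtain ⟨a, ha⟩ := h1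
  obtain ⟨b, hb⟩ := h2
  obtain ⟨c, hc⟩ := h3
  rw [ha, hb, hc, Rdet, Matrix.det_fin_three]
  simp only [Matrix.of_apply, Matrix.cons_val, key]
  ring
end

section
/- Let K be an algebraically closed field of characteristic 0 or at least 11, and let f ∈ K[X,Z] be a squarefree binary octic with Shioda invariants j_d = J_d(f). Then f is GL₂(K)-equivalent to a form X⁸ + a·X⁴Z⁴ + Z⁸ for some a ∈ K — equivalently, the automorphism group of the genus-3 hyperelliptic curve y² = f(x,1) contains C₂ × D₈ — if and only if the following nine relations hold: 54·j₄³ − 81·j₄²·j₂² − 1080·j₄·j₃²·j₂ + 36·j₄·j₂⁴ − 3600·j₃⁴ + 240·j₃²·j₂³ − 4·j₂⁶ = 0; 60·j₅·j₃ + 18·j₄² − 15·j₄·j₂² − 60·j₃²·j₂ + 2·j₂⁴ = 0; 3·j₅·j₄ − 2·j₅·j₂² + 15·j₄·j₃·j₂ + 60·j₃³ − 2·j₃·j₂³ = 0; 5·j₅² − 6·j₄²·j₂ − 30·j₄·j₃² + j₄·j₂³ = 0; 18·j₆ − 9·j₄·j₂ − 60·j₃² + 2·j₂³ = 0; 3·j₇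 − j₅·j₂ + 3·j₄·j₃ = 0; 1260·j₈ − 18·j₄² − 63·j₄·j₂² − 420·j₃²·j₂ + 14·j₂⁴ = 0; 18·j₉ − 2·j₅·j₂² + 15·j₄·j₃·j₂ + 60·j₃³ − 2·j₃·j₂³ = 0; 630·j₁₀ − 15·j₄²·j₂ − 30·j₄·j₃² + j₄·j₂³ = 0. Moreover, in that case f is GL₂(K)-equivalent to X⁸ + a₄·X⁴Z⁴ + a₀·Z⁸ where a₀ = −a₄²/140 + j₂/2 and a₄ = 35·(j₅·j₂ + 6·j₄·j₃)/(2·j₂³ − 60·j₃²) if 30·j₃² ≠ j₂³, while a₄ = 35·j₅/(3·j₄) if 30·j₃² = j₂³ and j₄ ≠ 0. -/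
open MvPolynomial

/-- Iterated partial derivative in the variable `x` (the variable `0`). -/
noncomputable def dX {k : Type*} [CommSemiring k] (n : ℕ) (p : MvPolynomial (Fin 2) k) :
    MvPolynomial (Fin 2) k :=
  (fun q => pderiv (0 : Fin 2) q)^[n] p

/-- Iterated partial derivative in the variable `z` (the variable `1`). -/
noncomputable def dZ {k : Type*} [CommSemiring k] (n : ℕ) (p : MvPolynomial (Fin 2) k) :
    MvPolynomial (Fin 2) k :=
  (fun q => pderiv (1 : Fin 2) q)^[n] p

/-- The `h`-th transvectant of two binary forms of degrees `r₁` and `r₂`. -/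
noncomputable def transvectant {k : Type*} [Field k] (r₁ r₂ h : ℕ)
    (f g : MvPolynomial (Fin 2) k) : MvPolynomial (Fin 2) k :=
  C ((((r₁ - h).factorial * (r₂ - h).factorial : ℕ) : k) /
      (((r₁.factorial * r₂.factorial : ℕ)) : k)) *
    ∑ j ∈ Finset.range (h + 1),
      C ((-1 : k) ^ j * (h.choose j : k)) * (dX (h - j) (dZ j f) * dX j (dZ (h - j) g))

section Shioda

variable {k : Type*} [Field k]

/-- The covariant `𝔤 = (f,f)₄` of a binary octic. -/
noncomputable def covG (f : MvPolynomial (Fin 2) k) := transvectant 8 8 4 f f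

/-- The covariant `𝔨 = (f,f)₆` of a binary octic. -/
noncomputable def covK (f : MvPolynomial (Fin 2) k) := transvectant 8 8 6 f f

/-- The covariant `𝔥 = (𝔨,𝔨)₂` of a binary octic. -/
noncomputable def covH (f : MvPolynomial (Fin 2) k) := transvectant 4 4 2 (covK f) (covK f)

/-- The covariant `𝔪 = (f,𝔨)₄` of a binary octic. -/
noncomputable def covM (f : MvPolynomial (Fin 2) k) := transvectant 8 4 4 f (covK f)

/-- The covariant `𝔫 = (f,𝔥)₄` of a binary octic. -/
noncomputable def covN (f : MvPolynomial (Fin 2) k) := transvectant 8 4 4 f (covH f)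

/-- The covariant `𝔭 = (𝔤,𝔨)₄` of a binary octic. -/
noncomputable def covP (f : MvPolynomial (Fin 2) k) := transvectant 8 4 4 (covG f) (covK f)

/-- The covariant `𝔮 = (𝔤,𝔥)₄` of a binary octic. -/
noncomputable def covQ (f : MvPolynomial (Fin 2) k) := transvectant 8 4 4 (covG f) (covH f)

/-- The Shioda invariant `J₂ = (f,f)₈`. -/
noncomputable def shJ2 (f : MvPolynomial (Fin 2) k) : k :=
  constantCoeff (transvectant 8 8 8 f f)

/-- The Shioda invariant `J₃ = (f,𝔤)₈`. -/
noncomputable def shJ3 (f : MvPolynomial (Fin 2) k) : k :=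
  constantCoeff (transvectant 8 8 8 f (covG f))

/-- The Shioda invariant `J₄ = (𝔨,𝔨)₄`. -/
noncomputable def shJ4 (f : MvPolynomial (Fin 2) k) : k :=
  constantCoeff (transvectant 4 4 4 (covK f) (covK f))

/-- The Shioda invariant `J₅ = (𝔪,𝔨)₄`. -/
noncomputable def shJ5 (f : MvPolynomial (Fin 2) k) : k :=
  constantCoeff (transvectant 4 4 4 (covM f) (covK f))

/-- The Shioda invariant `J₆ = (𝔨,𝔥)₄`. -/
noncomputable def shJ6 (f : MvPolynomial (Fin 2) k) : k :=
  constantCoeff (transvectant 4 4 4 (covK f) (covH f))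

/-- The Shioda invariant `J₇ = (𝔪,𝔥)₄`. -/
noncomputable def shJ7 (f : MvPolynomial (Fin 2) k) : k :=
  constantCoeff (transvectant 4 4 4 (covM f) (covH f))

/-- The Shioda invariant `J₈ = (𝔭,𝔥)₄`. -/
noncomputable def shJ8 (f : MvPolynomial (Fin 2) k) : k :=
  constantCoeff (transvectant 4 4 4 (covP f) (covH f))

/-- The Shioda invariant `J₉ = (𝔫,𝔥)₄`. -/
noncomputable def shJ9 (f : MvPolynomial (Fin 2) k) : k :=
  constantCoeff (transvectant 4 4 4 (covN f) (covH f))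

/-- The Shioda invariant `J₁₀ = (𝔮,𝔥)₄`. -/
noncomputable def shJ10 (f : MvPolynomial (Fin 2) k) : k :=
  constantCoeff (transvectant 4 4 4 (covQ f) (covH f))

end Shioda

/-- The nine stratum relations for `C₂ × D₈` among the Shioda invariants. -/
def D8rel {k : Type*} [Field k] (j2 j3 j4 j5 j6 j7 j8 j9 j10 : k) : Prop :=
  54*j4^3 - 81*j4^2*j2^2 - 1080*j4*j3^2*j2 + 36*j4*j2^4 - 3600*j3^4 + 240*j3^2*j2^3
      - 4*j2^6 = 0 ∧
  60*j5*j3 + 18*j4^2 - 15*j4*j2^2 - 60*j3^2*j2 + 2*j2^4 = 0 ∧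
  3*j5*j4 - 2*j5*j2^2 + 15*j4*j3*j2 + 60*j3^3 - 2*j3*j2^3 = 0 ∧
  5*j5^2 - 6*j4^2*j2 - 30*j4*j3^2 + j4*j2^3 = 0 ∧
  18*j6 - 9*j4*j2 - 60*j3^2 + 2*j2^3 = 0 ∧
  3*j7 - j5*j2 + 3*j4*j3 = 0 ∧
  1260*j8 - 18*j4^2 - 63*j4*j2^2 - 420*j3^2*j2 + 14*j2^4 = 0 ∧
  18*j9 - 2*j5*j2^2 + 15*j4*j3*j2 + 60*j3^3 - 2*j3*j2^3 = 0 ∧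
  630*j10 - 15*j4^2*j2 - 30*j4*j3^2 + j4*j2^3 = 0

/-- The generic value of the coefficient `a₄` in the reconstruction of a `C₂ × D₈` octic. -/
noncomputable def a4gen {k : Type*} [Field k] (j2 j3 j4 j5 : k) : k :=
  35 * (j5 * j2 + 6 * j4 * j3) / (2 * j2 ^ 3 - 60 * j3 ^ 2)

/-- The special value of the coefficient `a₄` (used when `30·j₃² = j₂³` and `j₄ ≠ 0`). -/
noncomputable def a4spec {k : Type*} [Field k] (j4 j5 : k) : k := 35 * j5 / (3 * j4)

/-- The coefficient `a₀ = −a₄²/140 + j₂/2`. -/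
noncomputable def a0of {k : Type*} [Field k] (j2 a4 : k) : k := -(a4 ^ 2) / 140 + j2 / 2

section Proof

set_option linter.unusedSimpArgs false
set_option linter.unusedVariables false

variable {K : Type*} [Field K]

/-- Linear substitution. -/
noncomputable def lsub (M : Matrix (Fin 2) (Fin 2) K) (p : MvPolynomial (Fin 2) K) :
    MvPolynomial (Fin 2) K :=
  bind₁ (fun j : Fin 2 => C (M j 0) * X 0 + C (M j 1) * X 1) p

lemma lsub_add (M : Matrix (Fin 2) (Fin 2) K) (p q) : lsub M (p + q) = lsub M p + lsub M q := by
  simp [lsub]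
lemma lsub_sub (M : Matrix (Fin 2) (Fin 2) K) (p q) : lsub M (p - q) = lsub M p - lsub M q := by
  simp [lsub]
lemma lsub_mul (M : Matrix (Fin 2) (Fin 2) K) (p q) : lsub M (p * q) = lsub M p * lsub M q := by
  simp [lsub]
lemma lsub_pow (M : Matrix (Fin 2) (Fin 2) K) (p) (n : ℕ) : lsub M (p ^ n) = lsub M p ^ n := by
  simp [lsub]
lemma lsub_C (M : Matrix (Fin 2) (Fin 2) K) (a : K) : lsub M (C a) = C a := by
  simp [lsub]
lemma lsub_X (M : Matrix (Fin 2) (Fin 2) K) (j) :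
    lsub M (X j) = C (M j 0) * X 0 + C (M j 1) * X 1 := by
  simp [lsub]

lemma lsub_lsub (M N : Matrix (Fin 2) (Fin 2) K) (p) : lsub M (lsub N p) = lsub (N * M) p := by
  unfold lsub
  rw [bind₁_bind₁]
  congr 2
  funext j
  simp only [map_add, map_mul, bind₁_C_right, bind₁_X_right, Matrix.mul_apply, Fin.sum_univ_two]
  ring

lemma lsub_one (p : MvPolynomial (Fin 2) K) : lsub 1 p = p := by
  unfold lsub
  have : (fun j : Fin 2 => C ((1 : Matrix (Fin 2) (Fin 2) K) j 0) * X 0 +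
      C ((1 : Matrix (Fin 2) (Fin 2) K) j 1) * X 1) = (X : Fin 2 → MvPolynomial (Fin 2) K) := by
    funext j
    fin_cases j
    · change C ((1 : Matrix (Fin 2) (Fin 2) K) 0 0) * X 0 + C ((1 : Matrix (Fin 2) (Fin 2) K) 0 1) * X 1 = X 0
      simp
    · change C ((1 : Matrix (Fin 2) (Fin 2) K) 1 0) * X 0 + C ((1 : Matrix (Fin 2) (Fin 2) K) 1 1) * X 1 = X 1
      simp
  rw [this, bind₁_X_left]
  rfl

lemma lsub_inv_left {M : Matrix (Fin 2) (Fin 2) K} (hM : M.det ≠ 0) (p) :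
    lsub M⁻¹ (lsub M p) = p := by
  rw [lsub_lsub, Matrix.mul_nonsing_inv _ (isUnit_iff_ne_zero.2 hM), lsub_one]

lemma constantCoeff_lsub (M : Matrix (Fin 2) (Fin 2) K) (p) :
    constantCoeff (lsub M p) = constantCoeff p := by
  induction p using MvPolynomial.induction_on with
  | C a => rw [lsub_C]
  | add p q hp hq => rw [lsub_add, map_add, map_add, hp, hq]
  | mul_X p n hp => rw [lsub_mul, map_mul, map_mul, lsub_X]; simp

lemma pderiv0_lsub (M : Matrix (Fin 2) (Fin 2) K) (p) :
    pderiv 0 (lsub M p) = C (M 0 0) * lsub M (pderiv 0 p) + C (M 1 0) * lsub M (pderiv 1 p) := by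
  induction p using MvPolynomial.induction_on with
  | C a => simp [lsub]
  | add p q hp hq => simp only [lsub_add, map_add, hp, hq]; ring
  | mul_X p n hp =>
    rw [lsub_mul, Derivation.leibniz, hp, lsub_X]
    simp only [Derivation.leibniz, smul_eq_mul, lsub_add, lsub_mul, lsub_X]
    fin_cases n <;> simp [lsub, pderiv_X] <;> ring

lemma pderiv1_lsub (M : Matrix (Fin 2) (Fin 2) K) (p) :
    pderiv 1 (lsub M p) = C (M 0 1) * lsub M (pderiv 0 p) + C (M 1 1) * lsub M (pderiv 1 p) := by
  induction p using MvPolynomial.induction_on with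
  | C a => simp [lsub]
  | add p q hp hq => simp only [lsub_add, map_add, hp, hq]; ring
  | mul_X p n hp =>
    rw [lsub_mul, Derivation.leibniz, hp, lsub_X]
    simp only [Derivation.leibniz, smul_eq_mul, lsub_add, lsub_mul, lsub_X]
    fin_cases n <;> simp [lsub, pderiv_X] <;> ring

/-- Unnormalised transvectant, recursively. -/
noncomputable def rT : ℕ → MvPolynomial (Fin 2) K → MvPolynomial (Fin 2) K →
    MvPolynomial (Fin 2) K
  | 0, f, g => f * g
  | h + 1, f, g => rT h (pderiv 0 f) (pderiv 1 g) - rT h (pderiv 1 f) (pderiv 0 g)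

lemma rT_add_left (h : ℕ) (f f' g : MvPolynomial (Fin 2) K) :
    rT h (f + f') g = rT h f g + rT h f' g := by
  induction h generalizing f f' g with
  | zero => simp [rT]; ring
  | succ h ih => simp only [rT, map_add, ih]; ring

lemma rT_add_right (h : ℕ) (f g g' : MvPolynomial (Fin 2) K) :
    rT h f (g + g') = rT h f g + rT h f g' := by
  induction h generalizing f g g' with
  | zero => simp [rT]; ring
  | succ h ih => simp only [rT, map_add, ih]; ring

lemma rT_C_left (h : ℕ) (a : K) (f g : MvPolynomial (Fin 2) K) :
    rT h (C a * f) g = C a * rT h f g := by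
  induction h generalizing f g with
  | zero => simp [rT]; ring
  | succ h ih => simp only [rT, pderiv_C_mul, ih]; ring

lemma rT_C_right (h : ℕ) (a : K) (f g : MvPolynomial (Fin 2) K) :
    rT h f (C a * g) = C a * rT h f g := by
  induction h generalizing f g with
  | zero => simp [rT]; ring
  | succ h ih => simp only [rT, pderiv_C_mul, ih]; ring

lemma rT_lsub (M : Matrix (Fin 2) (Fin 2) K) (h : ℕ) (f g : MvPolynomial (Fin 2) K) :
    rT h (lsub M f) (lsub M g) = C (M.det ^ h) * lsub M (rT h f g) := by
  induction h generalizing f g with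
  | zero => simp [rT, lsub_mul]
  | succ h ih =>
    simp only [rT, pderiv0_lsub, pderiv1_lsub, rT_add_left, rT_add_right, rT_C_left, rT_C_right,
      ih, lsub_sub, Matrix.det_fin_two, pow_succ, map_mul, map_sub]
    ring

lemma dX_succ (n : ℕ) (p : MvPolynomial (Fin 2) K) : dX (n + 1) p = dX n (pderiv 0 p) := by
  simp [dX]
lemma dZ_succ (n : ℕ) (p : MvPolynomial (Fin 2) K) : dZ (n + 1) p = dZ n (pderiv 1 p) := by
  simp [dZ]

lemma pderiv_comm' (p : MvPolynomial (Fin 2) K) :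
    pderiv 0 (pderiv 1 p) = pderiv 1 (pderiv 0 p) := by
  induction p using MvPolynomial.induction_on with
  | C a => simp
  | add p q hp hq => simp only [map_add, hp, hq]
  | mul_X p n hp =>
    simp only [Derivation.leibniz, smul_eq_mul, map_add, hp]
    fin_cases n <;> simp [pderiv_X] <;> ring

lemma dZ_pderiv0 (n : ℕ) (p : MvPolynomial (Fin 2) K) :
    dZ n (pderiv 0 p) = pderiv 0 (dZ n p) := by
  induction n generalizing p with
  | zero => simp [dZ]
  | succ n ih => rw [dZ_succ, dZ_succ, ← pderiv_comm', ih]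

lemma rT_eq_sum (h : ℕ) (f g : MvPolynomial (Fin 2) K) :
    rT h f g = ∑ j ∈ Finset.range (h + 1),
      C ((-1 : K) ^ j * (h.choose j : K)) * (dX (h - j) (dZ j f) * dX j (dZ (h - j) g)) := by
  induction h generalizing f g with
  | zero => simp [rT, dX, dZ]
  | succ h ih =>
    rw [rT, ih, ih]
    rw [Finset.sum_range_succ' _ (h + 1)]
    have e1 : ∀ j ∈ Finset.range (h + 1),
        C ((-1 : K) ^ (j + 1) * ((h + 1).choose (j + 1) : K)) *
          (dX (h + 1 - (j + 1)) (dZ (j + 1) f) * dX (j + 1) (dZ (h + 1 - (j + 1)) g)) =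
        - (C ((-1 : K) ^ j * (h.choose j : K)) *
          (dX (h - j) (dZ j (pderiv 1 f)) * dX j (dZ (h - j) (pderiv 0 g)))) +
        C ((-1 : K) ^ (j + 1) * (h.choose (j + 1) : K)) *
          (dX (h - j) (dZ (j + 1) f) * dX (j + 1) (dZ (h - j) g)) := by
      intro j hj
      rw [Nat.choose_succ_succ, Nat.add_sub_add_right, dZ_succ, dX_succ, dZ_pderiv0]
      push_cast
      simp only [map_mul, map_add, pow_succ, map_neg, map_one]
      ring
    rw [Finset.sum_congr rfl e1, Finset.sum_add_distrib, Finset.sum_neg_distrib]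
    have e2 : ∑ j ∈ Finset.range (h + 1),
        C ((-1 : K) ^ j * (h.choose j : K)) *
          (dX (h - j) (dZ j (pderiv 0 f)) * dX j (dZ (h - j) (pderiv 1 g))) =
        ∑ j ∈ Finset.range (h + 1), C ((-1 : K) ^ (j + 1) * (h.choose (j + 1) : K)) *
          (dX (h - j) (dZ (j + 1) f) * dX (j + 1) (dZ (h - j) g)) +
        C ((-1 : K) ^ 0 * ((h + 1).choose 0 : K)) *
          (dX (h + 1 - 0) (dZ 0 f) * dX 0 (dZ (h + 1 - 0) g)) := by
      rw [Finset.sum_range_succ', Finset.sum_range_succ _ h]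
      have : (h.choose (h + 1)) = 0 := by simp
      rw [this]
      simp only [Nat.cast_zero, mul_zero, map_zero, zero_mul, add_zero]
      congr 1
      · apply Finset.sum_congr rfl
        intro j hj
        have hj' := Finset.mem_range.1 hj
        rw [show h - j = h - (j + 1) + 1 by omega, dX_succ, dZ_succ (h - (j + 1)) g, dZ_pderiv0,
          dX_succ, dX_succ]
      · simp only [Nat.choose_zero_right, Nat.sub_zero, dX_succ, dZ_succ h g, dZ_pderiv0]
    rw [e2]
    ring

/-- The normalising constant of the transvectant. -/
noncomputable def tcst (K : Type*) [Field K] (r₁ r₂ h : ℕ) : K :=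
  (((r₁ - h).factorial * (r₂ - h).factorial : ℕ) : K) / (((r₁.factorial * r₂.factorial : ℕ)) : K)

lemma transvectant_eq (r₁ r₂ h : ℕ) (f g : MvPolynomial (Fin 2) K) :
    transvectant r₁ r₂ h f g = C (tcst K r₁ r₂ h) * rT h f g := by
  rw [rT_eq_sum]; rfl

lemma transvectant_lsub (M : Matrix (Fin 2) (Fin 2) K) (r₁ r₂ h : ℕ) (a b : K)
    (f g : MvPolynomial (Fin 2) K) :
    transvectant r₁ r₂ h (C a * lsub M f) (C b * lsub M g) =
      C (a * b * M.det ^ h) * lsub M (transvectant r₁ r₂ h f g) := by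
  rw [transvectant_eq, transvectant_eq, rT_C_left, rT_C_right, rT_lsub, lsub_mul, lsub_C]
  simp only [map_mul]
  ring

lemma covG_lsub (M : Matrix (Fin 2) (Fin 2) K) (f) :
    covG (lsub M f) = C (M.det ^ 4) * lsub M (covG f) := by
  simpa [covG] using transvectant_lsub M 8 8 4 1 1 f f

lemma covK_lsub (M : Matrix (Fin 2) (Fin 2) K) (f) :
    covK (lsub M f) = C (M.det ^ 6) * lsub M (covK f) := by
  simpa [covK] using transvectant_lsub M 8 8 6 1 1 f f

lemma covH_lsub (M : Matrix (Fin 2) (Fin 2) K) (f) :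
    covH (lsub M f) = C (M.det ^ 14) * lsub M (covH f) := by
  rw [covH, covK_lsub, transvectant_lsub, covH]; congr 2; ring

lemma covM_lsub (M : Matrix (Fin 2) (Fin 2) K) (f) :
    covM (lsub M f) = C (M.det ^ 10) * lsub M (covM f) := by
  have := transvectant_lsub M 8 4 4 1 (M.det ^ 6) f (covK f)
  rw [map_one, one_mul] at this
  rw [covM, covK_lsub, this, covM]; congr 2; ring

lemma covN_lsub (M : Matrix (Fin 2) (Fin 2) K) (f) :
    covN (lsub M f) = C (M.det ^ 18) * lsub M (covN f) := by
  have := transvectant_lsub M 8 4 4 1 (M.det ^ 14) f (covH f)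
  rw [map_one, one_mul] at this
  rw [covN, covH_lsub, this, covN]; congr 2; ring

lemma covP_lsub (M : Matrix (Fin 2) (Fin 2) K) (f) :
    covP (lsub M f) = C (M.det ^ 14) * lsub M (covP f) := by
  rw [covP, covK_lsub, covG_lsub, transvectant_lsub, covP]; congr 2; ring

lemma covQ_lsub (M : Matrix (Fin 2) (Fin 2) K) (f) :
    covQ (lsub M f) = C (M.det ^ 22) * lsub M (covQ f) := by
  rw [covQ, covH_lsub, covG_lsub, transvectant_lsub, covQ]; congr 2; ring

lemma cc_aux (M : Matrix (Fin 2) (Fin 2) K) (a : K) (p) :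
    constantCoeff (C a * lsub M p) = a * constantCoeff p := by
  rw [map_mul, constantCoeff_C, constantCoeff_lsub]

lemma shJ2_lsub (M : Matrix (Fin 2) (Fin 2) K) (f) :
    shJ2 (lsub M f) = (M.det ^ 4) ^ 2 * shJ2 f := by
  have := transvectant_lsub M 8 8 8 1 1 f f
  rw [map_one, one_mul] at this
  rw [shJ2, this, cc_aux, shJ2]; ring

lemma shJ3_lsub (M : Matrix (Fin 2) (Fin 2) K) (f) :
    shJ3 (lsub M f) = (M.det ^ 4) ^ 3 * shJ3 f := by
  have := transvectant_lsub M 8 8 8 1 (M.det ^ 4) f (covG f)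
  rw [map_one, one_mul] at this
  rw [shJ3, covG_lsub, this, cc_aux, shJ3]; ring

lemma shJ4_lsub (M : Matrix (Fin 2) (Fin 2) K) (f) :
    shJ4 (lsub M f) = (M.det ^ 4) ^ 4 * shJ4 f := by
  rw [shJ4, covK_lsub, transvectant_lsub, cc_aux, shJ4]; ring

lemma shJ5_lsub (M : Matrix (Fin 2) (Fin 2) K) (f) :
    shJ5 (lsub M f) = (M.det ^ 4) ^ 5 * shJ5 f := by
  rw [shJ5, covM_lsub, covK_lsub, transvectant_lsub, cc_aux, shJ5]; ring

lemma shJ6_lsub (M : Matrix (Fin 2) (Fin 2) K) (f) :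
    shJ6 (lsub M f) = (M.det ^ 4) ^ 6 * shJ6 f := by
  rw [shJ6, covK_lsub, covH_lsub, transvectant_lsub, cc_aux, shJ6]; ring

lemma shJ7_lsub (M : Matrix (Fin 2) (Fin 2) K) (f) :
    shJ7 (lsub M f) = (M.det ^ 4) ^ 7 * shJ7 f := by
  rw [shJ7, covM_lsub, covH_lsub, transvectant_lsub, cc_aux, shJ7]; ring

lemma shJ8_lsub (M : Matrix (Fin 2) (Fin 2) K) (f) :
    shJ8 (lsub M f) = (M.det ^ 4) ^ 8 * shJ8 f := by
  rw [shJ8, covP_lsub, covH_lsub, transvectant_lsub, cc_aux, shJ8]; ring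

lemma shJ9_lsub (M : Matrix (Fin 2) (Fin 2) K) (f) :
    shJ9 (lsub M f) = (M.det ^ 4) ^ 9 * shJ9 f := by
  rw [shJ9, covN_lsub, covH_lsub, transvectant_lsub, cc_aux, shJ9]; ring

lemma shJ10_lsub (M : Matrix (Fin 2) (Fin 2) K) (f) :
    shJ10 (lsub M f) = (M.det ^ 4) ^ 10 * shJ10 f := by
  rw [shJ10, covQ_lsub, covH_lsub, transvectant_lsub, cc_aux, shJ10]; ring

/-- The relations for the invariants of a form. -/
def RelF (f : MvPolynomial (Fin 2) K) : Prop :=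
  D8rel (shJ2 f) (shJ3 f) (shJ4 f) (shJ5 f) (shJ6 f) (shJ7 f) (shJ8 f) (shJ9 f) (shJ10 f)

lemma RelF_lsub (M : Matrix (Fin 2) (Fin 2) K) (f) (h : RelF f) : RelF (lsub M f) := by
  unfold RelF D8rel at *
  rw [shJ2_lsub, shJ3_lsub, shJ4_lsub, shJ5_lsub, shJ6_lsub, shJ7_lsub, shJ8_lsub, shJ9_lsub,
    shJ10_lsub]
  generalize M.det ^ 4 = d
  obtain ⟨h1, h2, h3, h4, h5, h6, h7, h8, h9⟩ := h
  refine ⟨?_, ?_, ?_, ?_, ?_, ?_, ?_, ?_, ?_⟩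
  · linear_combination d ^ 12 * h1
  · linear_combination d ^ 8 * h2
  · linear_combination d ^ 9 * h3
  · linear_combination d ^ 10 * h4
  · linear_combination d ^ 6 * h5
  · linear_combination d ^ 7 * h6
  · linear_combination d ^ 8 * h7
  · linear_combination d ^ 9 * h8
  · linear_combination d ^ 10 * h9

/-- Binary form with normalised coefficients. -/
noncomputable def bform (n : ℕ) (c : ℕ → K) : MvPolynomial (Fin 2) K :=
  ∑ i ∈ Finset.range (n + 1), C ((n.choose i : K) * c i) * (X 0 ^ (n - i) * X 1 ^ i)

lemma pderiv0_bform (n : ℕ) (c : ℕ → K) :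
    pderiv 0 (bform (n + 1) c) = C ((n + 1 : ℕ) : K) * bform n c := by
  unfold bform
  rw [map_sum, Finset.sum_range_succ, Finset.mul_sum]
  have : pderiv (0 : Fin 2) (C (((n + 1).choose (n + 1) : K) * c (n + 1)) *
      (X 0 ^ (n + 1 - (n + 1)) * X 1 ^ (n + 1)) : MvPolynomial (Fin 2) K) = 0 := by
    simp [Derivation.leibniz, Derivation.leibniz_pow, pderiv_X]
  rw [this, add_zero]
  apply Finset.sum_congr rfl
  intro i hi
  have hi' := Finset.mem_range.1 hi
  obtain ⟨m, rfl⟩ : ∃ m, n = m + i := ⟨n - i, by omega⟩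
  have key := Nat.choose_mul_succ_eq (m + i) i
  rw [show m + i + 1 - i = m + 1 by omega] at key ⊢
  have key' : (((m + i).choose i : ℕ) : K) * ((m + i + 1 : ℕ) : K) =
    ((m + i + 1).choose i : K) * ((m + 1 : ℕ) : K) := by
    rw [← Nat.cast_mul, key, Nat.cast_mul]
  rw [pderiv_C_mul]
  simp only [Derivation.leibniz, Derivation.leibniz_pow, pderiv_X, smul_eq_mul]
  simp only [Nat.add_sub_cancel]
  have h2 := congrArg (C (σ := Fin 2)) key'
  simp only [map_mul, map_natCast] at h2 ⊢
  simp only [nsmul_eq_mul]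
  simp
  push_cast at h2
  linear_combination (-(C (c i) * X 0 ^ m * X 1 ^ i)) * h2

lemma pderiv1_bform (n : ℕ) (c : ℕ → K) :
    pderiv 1 (bform (n + 1) c) = C ((n + 1 : ℕ) : K) * bform n (fun i => c (i + 1)) := by
  unfold bform
  rw [map_sum, Finset.sum_range_succ', Finset.mul_sum]
  have : pderiv (1 : Fin 2) (C (((n + 1).choose 0 : K) * c 0) *
      (X 0 ^ (n + 1 - 0) * X 1 ^ 0) : MvPolynomial (Fin 2) K) = 0 := by
    simp [Derivation.leibniz, Derivation.leibniz_pow, pderiv_X]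
  rw [this, add_zero]
  apply Finset.sum_congr rfl
  intro i hi
  have key := Nat.add_one_mul_choose_eq n i
  have key' : ((n + 1 : ℕ) : K) * ((n.choose i : ℕ) : K) =
    ((n + 1).choose (i + 1) : K) * ((i + 1 : ℕ) : K) := by
    rw [← Nat.cast_mul, key, Nat.cast_mul]
  rw [pderiv_C_mul]
  simp only [Derivation.leibniz, Derivation.leibniz_pow, pderiv_X, smul_eq_mul]
  simp only [Nat.add_sub_cancel, Nat.add_sub_add_right]
  have h2 := congrArg (C (σ := Fin 2)) key'
  simp only [map_mul, map_natCast] at h2 ⊢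
  simp only [nsmul_eq_mul]
  simp
  push_cast at h2
  linear_combination (-(C (c (i + 1)) * X 0 ^ (n - i) * X 1 ^ i)) * h2

lemma rT_bform (h m n : ℕ) (c d : ℕ → K) :
    C ((m.factorial * n.factorial : ℕ) : K) * rT h (bform (m + h) c) (bform (n + h) d) =
    C (((m + h).factorial * (n + h).factorial : ℕ) : K) * ∑ j ∈ Finset.range (h + 1),
      C ((-1 : K) ^ j * (h.choose j : K)) *
        (bform m (fun i => c (i + j)) * bform n (fun i => d (i + (h - j)))) := by
  induction h generalizing c d with
  | zero => simp [rT]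
  | succ h ih =>
    rw [rT, ← Nat.add_assoc, ← Nat.add_assoc, pderiv0_bform, pderiv1_bform, pderiv0_bform,
      pderiv1_bform]
    simp only [rT_C_left, rT_C_right]
    have i1 := ih c (fun i => d (i + 1))
    have i2 := ih (fun i => c (i + 1)) d
    have key : ∑ j ∈ Finset.range (h + 1 + 1),
      C ((-1 : K) ^ j * ((h + 1).choose j : K)) *
        (bform m (fun i => c (i + j)) * bform n (fun i => d (i + (h + 1 - j)))) =
      ∑ j ∈ Finset.range (h + 1), C ((-1 : K) ^ j * (h.choose j : K)) *
        (bform m (fun i => c (i + j)) * bform n (fun i => d (i + (h - j) + 1))) -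
      ∑ j ∈ Finset.range (h + 1), C ((-1 : K) ^ j * (h.choose j : K)) *
        (bform m (fun i => c (i + j + 1)) * bform n (fun i => d (i + (h - j)))) := by
      rw [Finset.sum_range_succ' _ (h + 1)]
      have e1 : ∀ j ∈ Finset.range (h + 1),
          C ((-1 : K) ^ (j + 1) * ((h + 1).choose (j + 1) : K)) *
            (bform m (fun i => c (i + (j + 1))) *
              bform n (fun i => d (i + (h + 1 - (j + 1))))) =
          - (C ((-1 : K) ^ j * (h.choose j : K)) *
            (bform m (fun i => c (i + j + 1)) * bform n (fun i => d (i + (h - j))))) +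
          C ((-1 : K) ^ (j + 1) * (h.choose (j + 1) : K)) *
            (bform m (fun i => c (i + (j + 1))) * bform n (fun i => d (i + (h - j)))) := by
        intro j hj
        rw [Nat.choose_succ_succ, Nat.add_sub_add_right]
        push_cast
        simp only [map_mul, map_add, pow_succ, map_neg, map_one, ← add_assoc]
        ring
      rw [Finset.sum_congr rfl e1, Finset.sum_add_distrib, Finset.sum_neg_distrib]
      have e2 : ∑ j ∈ Finset.range (h + 1),
          C ((-1 : K) ^ j * (h.choose j : K)) *
            (bform m (fun i => c (i + j)) * bform n (fun i => d (i + (h - j) + 1))) =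
          ∑ j ∈ Finset.range (h + 1), C ((-1 : K) ^ (j + 1) * (h.choose (j + 1) : K)) *
            (bform m (fun i => c (i + (j + 1))) * bform n (fun i => d (i + (h - j)))) +
          C ((-1 : K) ^ 0 * ((h + 1).choose 0 : K)) *
            (bform m (fun i => c (i + 0)) * bform n (fun i => d (i + (h + 1 - 0)))) := by
        rw [Finset.sum_range_succ', Finset.sum_range_succ _ h]
        have : (h.choose (h + 1)) = 0 := by simp
        rw [this]
        simp only [Nat.cast_zero, mul_zero, map_zero, zero_mul, add_zero]
        congr 1
        · apply Finset.sum_congr rfl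
          intro j hj
          have hj' := Finset.mem_range.1 hj
          rw [show h - j = h - (j + 1) + 1 by omega]
          simp only [← add_assoc]
        · simp only [Nat.choose_zero_right, Nat.sub_zero, ← add_assoc]
      rw [e2]
      ring
    rw [key]
    simp only [Nat.factorial_succ, Nat.cast_mul, map_mul] at i1 i2 ⊢
    have r1 : ∀ x : ℕ → K, ∀ j : ℕ, (fun i => x (i + 1 + j)) = fun i => x (i + j + 1) := by
      intro x j; funext i; congr 1; omega
    have r2 : ∀ j : ℕ, (fun i => c (i + j + 1)) = fun i => c (i + (j + 1)) := by
      intro j; funext i; congr 1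
    linear_combination (C ((m + h + 1 : ℕ) : K) * C ((n + h + 1 : ℕ) : K)) * (i1 - i2)

lemma transvectant_bform (h m n : ℕ) (hm : ((m + h).factorial : K) ≠ 0)
    (hn : ((n + h).factorial : K) ≠ 0) (c d : ℕ → K) :
    transvectant (m + h) (n + h) h (bform (m + h) c) (bform (n + h) d) =
    ∑ j ∈ Finset.range (h + 1),
      C ((-1 : K) ^ j * (h.choose j : K)) *
        (bform m (fun i => c (i + j)) * bform n (fun i => d (i + (h - j)))) := by
  have key := rT_bform h m n c d
  rw [transvectant_eq]
  have hne : (C (((m + h).factorial * (n + h).factorial : ℕ) : K) :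
      MvPolynomial (Fin 2) K) ≠ 0 := by
    rw [Ne, C_eq_zero]; push_cast; exact mul_ne_zero hm hn
  apply mul_left_cancel₀ hne
  rw [← key, ← mul_assoc, ← C_mul]
  congr 2
  unfold tcst
  rw [Nat.add_sub_cancel, Nat.add_sub_cancel]
  have : (((m + h).factorial * (n + h).factorial : ℕ) : K) ≠ 0 := by
    push_cast; exact mul_ne_zero hm hn
  field_simp

/-- The characteristic is not 2, 3, 5, 7. -/
structure CharOK (K : Type*) [Field K] : Prop where
  h2 : (2 : K) ≠ 0
  h3 : (3 : K) ≠ 0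
  h5 : (5 : K) ≠ 0
  h7 : (7 : K) ≠ 0

lemma charOK_of (hchar : ringChar K = 0 ∨ 11 ≤ ringChar K) : CharOK K := by
  have key : ∀ n : ℕ, 0 < n → n < 11 → (n : K) ≠ 0 := by
    intro n h0 h1 h
    have hd := (ringChar.spec K n).1 h
    rcases hchar with h2 | h2
    · rw [h2] at hd; omega
    · have := Nat.le_of_dvd h0 hd; omega
  exact ⟨by exact_mod_cast key 2 (by norm_num) (by norm_num),
    by exact_mod_cast key 3 (by norm_num) (by norm_num),
    by exact_mod_cast key 5 (by norm_num) (by norm_num),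
    by exact_mod_cast key 7 (by norm_num) (by norm_num)⟩

lemma CharOK.f8 (H : CharOK K) : ((Nat.factorial 8 : ℕ) : K) ≠ 0 := by
  have : ((Nat.factorial 8 : ℕ) : K) = 2 ^ 7 * 3 ^ 2 * 5 * 7 := by
    norm_num [Nat.factorial]
  rw [this]
  have := H.h2; have := H.h3; have := H.h5; have := H.h7
  positivity

lemma CharOK.f4 (H : CharOK K) : ((Nat.factorial 4 : ℕ) : K) ≠ 0 := by
  have : ((Nat.factorial 4 : ℕ) : K) = 2 ^ 3 * 3 := by
    norm_num [Nat.factorial]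
  rw [this]
  have := H.h2; have := H.h3
  positivity

lemma bform0 (c : ℕ → K) : bform 0 c = C (c 0) := by
  simp [bform]

lemma bform2 (c : ℕ → K) : bform 2 c = C (c 0) * X 0 ^ 2 + 2 * C (c 1) * (X 0 * X 1) +
    C (c 2) * X 1 ^ 2 := by
  simp [bform, Finset.sum_range_succ]

lemma bform4 (c : ℕ → K) : bform 4 c = C (c 0) * X 0 ^ 4 + 4 * C (c 1) * (X 0 ^ 3 * X 1) +
    6 * C (c 2) * (X 0 ^ 2 * X 1 ^ 2) + 4 * C (c 3) * (X 0 * X 1 ^ 3) + C (c 4) * X 1 ^ 4 := by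
  simp [bform, Finset.sum_range_succ, Nat.choose]

lemma bform8 (c : ℕ → K) : bform 8 c = C (c 0) * X 0 ^ 8 + 8 * C (c 1) * (X 0 ^ 7 * X 1) +
    28 * C (c 2) * (X 0 ^ 6 * X 1 ^ 2) + 56 * C (c 3) * (X 0 ^ 5 * X 1 ^ 3) +
    70 * C (c 4) * (X 0 ^ 4 * X 1 ^ 4) + 56 * C (c 5) * (X 0 ^ 3 * X 1 ^ 5) +
    28 * C (c 6) * (X 0 ^ 2 * X 1 ^ 6) + 8 * C (c 7) * (X 0 * X 1 ^ 7) + C (c 8) * X 1 ^ 8 := by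
  simp [bform, Finset.sum_range_succ, Nat.choose]

lemma coeff_bform (n : ℕ) (c : ℕ → K) (i : ℕ) (hi : i ≤ n) :
    coeff (Finsupp.single 0 (n - i) + Finsupp.single 1 i) (bform n c) = (n.choose i : K) * c i := by
  unfold bform
  rw [coeff_sum, Finset.sum_eq_single i]
  · rw [coeff_C_mul, X_pow_eq_monomial, X_pow_eq_monomial, monomial_mul, coeff_monomial]
    simp
  · intro j hj hji
    rw [coeff_C_mul, X_pow_eq_monomial, X_pow_eq_monomial, monomial_mul, coeff_monomial, if_neg,
      mul_zero]
    intro h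
    have := DFunLike.congr_fun h 1
    simp at this
    exact hji this
  · intro h
    exact absurd (Finset.mem_range.2 (by omega)) h

lemma choose_ne {n i : ℕ} (hn : (n.factorial : K) ≠ 0) (hi : i ≤ n) : (n.choose i : K) ≠ 0 := by
  intro h
  apply hn
  rw [← Nat.choose_mul_factorial_mul_factorial hi]
  push_cast
  rw [h]; ring

lemma bform_inj {n : ℕ} (hn : (n.factorial : K) ≠ 0) {c d : ℕ → K} (h : bform n c = bform n d)
    (i : ℕ) (hi : i ≤ n) : c i = d i := by
  have h1 := coeff_bform n c i hi
  have h2 := coeff_bform n d i hi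
  rw [h, h2] at h1
  exact (mul_left_cancel₀ (choose_ne hn hi) h1).symm

lemma exists_bform {n : ℕ} (hn : (n.factorial : K) ≠ 0) {f : MvPolynomial (Fin 2) K}
    (hf : f.IsHomogeneous n) : ∃ c, f = bform n c := by
  refine ⟨fun i => coeff (Finsupp.single 0 (n - i) + Finsupp.single 1 i) f / (n.choose i : K), ?_⟩
  ext m
  by_cases hm : m.degree = n
  · have h01 : m 0 + m 1 = n := by
      rw [← hm, Finsupp.degree_eq_sum]; simp
    have : m = Finsupp.single 0 (n - m 1) + Finsupp.single 1 (m 1) := by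
      ext j
      fin_cases j
      · simp; omega
      · simp
    rw [this, coeff_bform _ _ _ (by omega), mul_div_cancel₀ _ (choose_ne hn (by omega))]
  · rw [hf.coeff_eq_zero hm, bform, coeff_sum]
    symm
    apply Finset.sum_eq_zero
    intro i hi
    have := Finset.mem_range.1 hi
    rw [coeff_C_mul, X_pow_eq_monomial, X_pow_eq_monomial, monomial_mul, coeff_monomial, if_neg,
      mul_zero]
    intro h
    apply hm
    rw [← h, map_add, Finsupp.degree_single, Finsupp.degree_single]
    omega

lemma lsub_hom (M : Matrix (Fin 2) (Fin 2) K) {n : ℕ} {f : MvPolynomial (Fin 2) K}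
    (hf : f.IsHomogeneous n) : (lsub M f).IsHomogeneous n := by
  have := hf.aeval (fun j : Fin 2 =>
    (C (M j 0) * X 0 + C (M j 1) * X 1 : MvPolynomial (Fin 2) K)) (n := 1) (fun j => by
    apply IsHomogeneous.add
    · simpa using (isHomogeneous_C (Fin 2) (M j 0)).mul (isHomogeneous_X K (0 : Fin 2))
    · simpa using (isHomogeneous_C (Fin 2) (M j 1)).mul (isHomogeneous_X K (1 : Fin 2)))
  rw [one_mul] at this
  exact this

lemma lsub_sqf {M : Matrix (Fin 2) (Fin 2) K} (hM : M.det ≠ 0) {f : MvPolynomial (Fin 2) K}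
    (hf : Squarefree f) : Squarefree (lsub M f) := by
  intro x hx
  obtain ⟨y, hy⟩ := hx
  have h1 : f = lsub M⁻¹ x * lsub M⁻¹ x * lsub M⁻¹ y := by
    rw [← lsub_mul, ← lsub_mul, ← hy, lsub_inv_left hM]
  have h2 := hf _ ⟨_, h1⟩
  obtain ⟨z, hz⟩ := h2.exists_right_inv
  have h3 := congrArg (lsub M) hz
  rw [lsub_mul, lsub_lsub, Matrix.nonsing_inv_mul _ (isUnit_iff_ne_zero.2 hM), lsub_one] at h3
  rw [← C_1, lsub_C, C_1] at h3
  exact IsUnit.of_mul_eq_one _ h3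

/-- quartic covariant, coefficients -/
noncomputable def kf (c : ℕ → K) : ℕ → K
  | 0 => 2 * (c 0 * c 6 - 6 * c 1 * c 5 + 15 * c 2 * c 4 - 10 * c 3 ^ 2)
  | 1 => c 0 * c 7 - 5 * c 1 * c 6 + 9 * c 2 * c 5 - 5 * c 3 * c 4
  | 2 => (c 0 * c 8 - 2 * c 1 * c 7 - 8 * c 2 * c 6 + 34 * c 3 * c 5 - 25 * c 4 ^ 2) / 3
  | 3 => c 1 * c 8 - 5 * c 2 * c 7 + 9 * c 3 * c 6 - 5 * c 4 * c 5
  | 4 => 2 * (c 2 * c 8 - 6 * c 3 * c 7 + 15 * c 4 * c 6 - 10 * c 5 ^ 2)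
  | _ => 0

lemma covK_bform (H : CharOK K) (c : ℕ → K) : covK (bform 8 c) = bform 4 (kf c) := by
  have := transvectant_bform 6 2 2 H.f8 H.f8 c c
  rw [covK, this, bform4]
  simp only [Finset.sum_range_succ, bform2, Finset.range_zero, Finset.sum_empty, kf]
  have h3 : (C ((c 0 * c 8 - 2 * c 1 * c 7 - 8 * c 2 * c 6 + 34 * c 3 * c 5 - 25 * c 4 ^ 2) / 3) :
    MvPolynomial (Fin 2) K) * 3 = C (c 0 * c 8 - 2 * c 1 * c 7 - 8 * c 2 * c 6 + 34 * c 3 * c 5 -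
      25 * c 4 ^ 2) := by
    rw [show (3 : MvPolynomial (Fin 2) K) = C 3 from rfl, ← C_mul, div_mul_cancel₀ _ H.h3]
  generalize (C ((c 0 * c 8 - 2 * c 1 * c 7 - 8 * c 2 * c 6 + 34 * c 3 * c 5 - 25 * c 4 ^ 2) / 3) :
    MvPolynomial (Fin 2) K) = w at *
  simp [Nat.choose, map_ofNat] at h3 ⊢
  linear_combination (-2 * X 0 ^ 2 * X 1 ^ 2) * h3

/-- octic covariant, coefficients -/
noncomputable def gf (c : ℕ → K) : ℕ → K
  | 0 => 2 * c 0 * c 4 - 8 * c 1 * c 3 + 6 * c 2 ^ 2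
  | 1 => c 0 * c 5 - 3 * c 1 * c 4 + 2 * c 2 * c 3
  | 2 => (3 * c 0 * c 6 - 4 * c 1 * c 5 - 11 * c 2 * c 4 + 12 * c 3 ^ 2) / 7
  | 3 => (c 0 * c 7 + 2 * c 1 * c 6 - 12 * c 2 * c 5 + 9 * c 3 * c 4) / 7
  | 4 => (c 0 * c 8 + 12 * c 1 * c 7 - 22 * c 2 * c 6 - 36 * c 3 * c 5 + 45 * c 4 ^ 2) / 35
  | 5 => (c 1 * c 8 + 2 * c 2 * c 7 - 12 * c 3 * c 6 + 9 * c 4 * c 5) / 7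
  | 6 => (3 * c 2 * c 8 - 4 * c 3 * c 7 - 11 * c 4 * c 6 + 12 * c 5 ^ 2) / 7
  | 7 => c 3 * c 8 - 3 * c 4 * c 7 + 2 * c 5 * c 6
  | 8 => 2 * c 4 * c 8 - 8 * c 5 * c 7 + 6 * c 6 ^ 2
  | _ => 0

lemma covG_bform (H : CharOK K) (c : ℕ → K) : covG (bform 8 c) = bform 8 (gf c) := by
  have := transvectant_bform 4 4 4 H.f8 H.f8 c c
  rw [covG, this, bform8]
  have h35 : (35 : K) ≠ 0 := by
    rw [show (35 : K) = 5 * 7 by norm_num]; exact mul_ne_zero H.h5 H.h7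
  have hd : ∀ a : K, (C (a / 7) : MvPolynomial (Fin 2) K) * 7 = C a := by
    intro a
    rw [show (7 : MvPolynomial (Fin 2) K) = C 7 from rfl, ← C_mul, div_mul_cancel₀ _ H.h7]
  have hd' : ∀ a : K, (C (a / 35) : MvPolynomial (Fin 2) K) * 35 = C a := by
    intro a
    rw [show (35 : MvPolynomial (Fin 2) K) = C 35 from rfl, ← C_mul, div_mul_cancel₀ _ h35]
  have e2 : (C (gf c 2) : MvPolynomial (Fin 2) K) * 7 = _ := hd _
  have e3 : (C (gf c 3) : MvPolynomial (Fin 2) K) * 7 = _ := hd _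
  have e4 : (C (gf c 4) : MvPolynomial (Fin 2) K) * 35 = _ := hd' _
  have e5 : (C (gf c 5) : MvPolynomial (Fin 2) K) * 7 = _ := hd _
  have e6 : (C (gf c 6) : MvPolynomial (Fin 2) K) * 7 = _ := hd _
  generalize (C (gf c 2) : MvPolynomial (Fin 2) K) = g2 at *
  generalize (C (gf c 3) : MvPolynomial (Fin 2) K) = g3 at *
  generalize (C (gf c 4) : MvPolynomial (Fin 2) K) = g4 at *
  generalize (C (gf c 5) : MvPolynomial (Fin 2) K) = g5 at *
  generalize (C (gf c 6) : MvPolynomial (Fin 2) K) = g6 at *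
  simp only [Finset.sum_range_succ, bform4, Finset.range_zero, Finset.sum_empty, gf]
  simp [Nat.choose, map_ofNat] at e2 e3 e4 e5 e6 ⊢
  linear_combination (-4 * X 0 ^ 6 * X 1 ^ 2) * e2 + (-8 * X 0 ^ 5 * X 1 ^ 3) * e3 +
    (-2 * X 0 ^ 4 * X 1 ^ 4) * e4 + (-8 * X 0 ^ 3 * X 1 ^ 5) * e5 + (-4 * X 0 ^ 2 * X 1 ^ 6) * e6

/-- Hessian of a quartic, coefficients -/
noncomputable def hf4 (k : ℕ → K) : ℕ → K
  | 0 => 2 * (k 0 * k 2 - k 1 ^ 2)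
  | 1 => k 0 * k 3 - k 1 * k 2
  | 2 => (k 0 * k 4 + 2 * k 1 * k 3 - 3 * k 2 ^ 2) / 3
  | 3 => k 1 * k 4 - k 2 * k 3
  | 4 => 2 * (k 2 * k 4 - k 3 ^ 2)
  | _ => 0

lemma T442_bform (H : CharOK K) (k : ℕ → K) :
    transvectant 4 4 2 (bform 4 k) (bform 4 k) = bform 4 (hf4 k) := by
  have := transvectant_bform 2 2 2 H.f4 H.f4 k k
  rw [this, bform4]
  have hd : ∀ a : K, (C (a / 3) : MvPolynomial (Fin 2) K) * 3 = C a := by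
    intro a
    rw [show (3 : MvPolynomial (Fin 2) K) = C 3 from rfl, ← C_mul, div_mul_cancel₀ _ H.h3]
  have e2 : (C (hf4 k 2) : MvPolynomial (Fin 2) K) * 3 = _ := hd _
  generalize (C (hf4 k 2) : MvPolynomial (Fin 2) K) = g2 at *
  simp only [Finset.sum_range_succ, bform2, Finset.range_zero, Finset.sum_empty, hf4]
  simp [Nat.choose, map_ofNat] at e2 ⊢
  linear_combination (-2 * X 0 ^ 2 * X 1 ^ 2) * e2

/-- contraction of an octic with a quartic -/
def mf (c k : ℕ → K) : ℕ → K := fun i =>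
  c i * k 4 - 4 * c (i + 1) * k 3 + 6 * c (i + 2) * k 2 - 4 * c (i + 3) * k 1 + c (i + 4) * k 0

lemma T844_bform (H : CharOK K) (c k : ℕ → K) :
    transvectant 8 4 4 (bform 8 c) (bform 4 k) = bform 4 (mf c k) := by
  have := transvectant_bform 4 4 0 H.f8 H.f4 c k
  rw [this, bform4]
  simp only [Finset.sum_range_succ, bform4, bform0, Finset.range_zero, Finset.sum_empty, mf]
  simp [Nat.choose, map_ofNat]
  ring

lemma T444_bform (H : CharOK K) (a b : ℕ → K) :
    constantCoeff (transvectant 4 4 4 (bform 4 a) (bform 4 b)) =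
      a 0 * b 4 - 4 * a 1 * b 3 + 6 * a 2 * b 2 - 4 * a 3 * b 1 + a 4 * b 0 := by
  have := transvectant_bform 4 0 0 H.f4 H.f4 a b
  rw [this]
  simp only [Finset.sum_range_succ, bform0, Finset.range_zero, Finset.sum_empty]
  simp [Nat.choose, map_ofNat]
  ring

lemma T888_bform (H : CharOK K) (a b : ℕ → K) :
    constantCoeff (transvectant 8 8 8 (bform 8 a) (bform 8 b)) =
      a 0 * b 8 - 8 * a 1 * b 7 + 28 * a 2 * b 6 - 56 * a 3 * b 5 + 70 * a 4 * b 4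
      - 56 * a 5 * b 3 + 28 * a 6 * b 2 - 8 * a 7 * b 1 + a 8 * b 0 := by
  have := transvectant_bform 8 0 0 H.f8 H.f8 a b
  rw [this]
  simp only [Finset.sum_range_succ, bform0, Finset.range_zero, Finset.sum_empty]
  simp [Nat.choose, map_ofNat]
  ring

lemma covH_bform (H : CharOK K) (c : ℕ → K) : covH (bform 8 c) = bform 4 (hf4 (kf c)) := by
  rw [covH, covK_bform H, T442_bform H]

lemma J2_bform (H : CharOK K) (c : ℕ → K) : shJ2 (bform 8 c) =
    2 * (c 0 * c 8 - 8 * c 1 * c 7 + 28 * c 2 * c 6 - 56 * c 3 * c 5 + 35 * c 4 ^ 2) := by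
  rw [shJ2, T888_bform H]; ring

lemma J3_bform (H : CharOK K) (c : ℕ → K) : shJ3 (bform 8 c) =
    6*c 0*c 4*c 8 - 24*c 0*c 5*c 7 + 18*c 0*c 6^2 - 24*c 1*c 3*c 8 + 72*c 1*c 4*c 7
      - 48*c 1*c 5*c 6 - 48*c 2*c 3*c 7 - 132*c 2*c 4*c 6 + 144*c 2*c 5^2 + 18*c 2^2*c 8
      - 216*c 3*c 4*c 5 + 144*c 3^2*c 6 + 90*c 4^3 := by
  rw [shJ3, covG_bform H, T888_bform H]
  have := H.h7; have := H.h5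
  have h35 : (35 : K) ≠ 0 := by
    rw [show (35 : K) = 5 * 7 by norm_num]; exact mul_ne_zero H.h5 H.h7
  simp only [gf]
  field_simp
  ring

lemma J4_bform (H : CharOK K) (c : ℕ → K) : shJ4 (bform 8 c) =
    2 * (kf c 0 * kf c 4 - 4 * kf c 1 * kf c 3 + 3 * kf c 2 ^ 2) := by
  rw [shJ4, covK_bform H, T444_bform H]; ring

lemma J5_bform (H : CharOK K) (c : ℕ → K) : shJ5 (bform 8 c) =
    mf c (kf c) 0 * kf c 4 - 4 * mf c (kf c) 1 * kf c 3 + 6 * mf c (kf c) 2 * kf c 2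
      - 4 * mf c (kf c) 3 * kf c 1 + mf c (kf c) 4 * kf c 0 := by
  rw [shJ5, covM, covK_bform H, T844_bform H, T444_bform H]

lemma J6_bform (H : CharOK K) (c : ℕ → K) : shJ6 (bform 8 c) =
    kf c 0 * hf4 (kf c) 4 - 4 * kf c 1 * hf4 (kf c) 3 + 6 * kf c 2 * hf4 (kf c) 2
      - 4 * kf c 3 * hf4 (kf c) 1 + kf c 4 * hf4 (kf c) 0 := by
  rw [shJ6, covH_bform H, covK_bform H, T444_bform H]

lemma J7_bform (H : CharOK K) (c : ℕ → K) : shJ7 (bform 8 c) =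
    mf c (kf c) 0 * hf4 (kf c) 4 - 4 * mf c (kf c) 1 * hf4 (kf c) 3
      + 6 * mf c (kf c) 2 * hf4 (kf c) 2
      - 4 * mf c (kf c) 3 * hf4 (kf c) 1 + mf c (kf c) 4 * hf4 (kf c) 0 := by
  rw [shJ7, covM, covH_bform H, covK_bform H, T844_bform H, T444_bform H]

lemma J8_bform (H : CharOK K) (c : ℕ → K) : shJ8 (bform 8 c) =
    mf (gf c) (kf c) 0 * hf4 (kf c) 4 - 4 * mf (gf c) (kf c) 1 * hf4 (kf c) 3
      + 6 * mf (gf c) (kf c) 2 * hf4 (kf c) 2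
      - 4 * mf (gf c) (kf c) 3 * hf4 (kf c) 1 + mf (gf c) (kf c) 4 * hf4 (kf c) 0 := by
  rw [shJ8, covP, covH_bform H, covK_bform H, covG_bform H, T844_bform H, T444_bform H]

lemma J9_bform (H : CharOK K) (c : ℕ → K) : shJ9 (bform 8 c) =
    mf c (hf4 (kf c)) 0 * hf4 (kf c) 4 - 4 * mf c (hf4 (kf c)) 1 * hf4 (kf c) 3
      + 6 * mf c (hf4 (kf c)) 2 * hf4 (kf c) 2
      - 4 * mf c (hf4 (kf c)) 3 * hf4 (kf c) 1 + mf c (hf4 (kf c)) 4 * hf4 (kf c) 0 := by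
  rw [shJ9, covN, covH_bform H, T844_bform H, T444_bform H]

lemma J10_bform (H : CharOK K) (c : ℕ → K) : shJ10 (bform 8 c) =
    mf (gf c) (hf4 (kf c)) 0 * hf4 (kf c) 4 - 4 * mf (gf c) (hf4 (kf c)) 1 * hf4 (kf c) 3
      + 6 * mf (gf c) (hf4 (kf c)) 2 * hf4 (kf c) 2
      - 4 * mf (gf c) (hf4 (kf c)) 3 * hf4 (kf c) 1
      + mf (gf c) (hf4 (kf c)) 4 * hf4 (kf c) 0 := by
  rw [shJ10, covQ, covH_bform H, covG_bform H, T844_bform H, T444_bform H]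

/-- The model form. -/
noncomputable def model (a : K) : MvPolynomial (Fin 2) K :=
  X 0 ^ 8 + C a * X 0 ^ 4 * X 1 ^ 4 + X 1 ^ 8

/-- coefficients of the model form -/
def mc (b : K) : ℕ → K
  | 0 => 1
  | 4 => b
  | 8 => 1
  | _ => 0

lemma model_eq (b : K) : model (70 * b) = bform 8 (mc b) := by
  rw [bform8]
  have h70 : (C 70 : MvPolynomial (Fin 2) K) = 70 := map_ofNat C 70
  simp [model, mc, h70]
  ring

lemma kf_mc (H : CharOK K) (b : K) : kf (mc b) 0 = 0 ∧ kf (mc b) 1 = 0 ∧ kf (mc b) 2 = (1 - 25 * b ^ 2) / 3 ∧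
    kf (mc b) 3 = 0 ∧ kf (mc b) 4 = 0 := by
  simp [kf, mc]

lemma hf_mc (H : CharOK K) (b : K) : hf4 (kf (mc b)) 0 = 0 ∧ hf4 (kf (mc b)) 1 = 0 ∧
    hf4 (kf (mc b)) 2 = - ((1 - 25 * b ^ 2) / 3) ^ 2 ∧
    hf4 (kf (mc b)) 3 = 0 ∧ hf4 (kf (mc b)) 4 = 0 := by
  obtain ⟨h0, h1, h2, h3, h4⟩ := kf_mc H b
  have := H.h3
  simp only [hf4, h0, h1, h2, h3, h4]
  refine ⟨by ring, by ring, ?_, by ring, by ring⟩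
  field_simp
  ring

lemma J2_mc (H : CharOK K) (b : K) : shJ2 (model (70 * b)) = 2 + 70 * b ^ 2 := by
  rw [model_eq, J2_bform H]; simp [mc]; ring
lemma J3_mc (H : CharOK K) (b : K) : shJ3 (model (70 * b)) = 6 * b + 90 * b ^ 3 := by
  rw [model_eq, J3_bform H]; simp [mc]
lemma J4_mc (H : CharOK K) (b : K) : shJ4 (model (70 * b)) = 6 * ((1 - 25 * b ^ 2) / 3) ^ 2 := by
  rw [model_eq, J4_bform H]
  obtain ⟨h0, h1, h2, h3, h4⟩ := kf_mc H b
  rw [h0, h1, h2, h3, h4]; ring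
lemma J5_mc (H : CharOK K) (b : K) :
    shJ5 (model (70 * b)) = 36 * b * ((1 - 25 * b ^ 2) / 3) ^ 2 := by
  rw [model_eq, J5_bform H]
  obtain ⟨h0, h1, h2, h3, h4⟩ := kf_mc H b
  simp only [h0, h1, h2, h3, h4, mf, mc]; ring
lemma J6_mc (H : CharOK K) (b : K) :
    shJ6 (model (70 * b)) = -6 * ((1 - 25 * b ^ 2) / 3) ^ 3 := by
  rw [model_eq, J6_bform H]
  obtain ⟨h0, h1, h2, h3, h4⟩ := kf_mc H b
  obtain ⟨g0, g1, g2, g3, g4⟩ := hf_mc H b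
  simp only [h0, h1, h2, h3, h4, g0, g1, g2, g3, g4, mf, mc]; ring
lemma J7_mc (H : CharOK K) (b : K) :
    shJ7 (model (70 * b)) = -36 * b * ((1 - 25 * b ^ 2) / 3) ^ 3 := by
  rw [model_eq, J7_bform H]
  obtain ⟨h0, h1, h2, h3, h4⟩ := kf_mc H b
  obtain ⟨g0, g1, g2, g3, g4⟩ := hf_mc H b
  simp only [h0, h1, h2, h3, h4, g0, g1, g2, g3, g4, mf, mc]; ring
lemma J8_mc (H : CharOK K) (b : K) :
    shJ8 (model (70 * b)) = -36 * ((1 + 45 * b ^ 2) / 35) * ((1 - 25 * b ^ 2) / 3) ^ 3 := by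
  rw [model_eq, J8_bform H]
  obtain ⟨h0, h1, h2, h3, h4⟩ := kf_mc H b
  obtain ⟨g0, g1, g2, g3, g4⟩ := hf_mc H b
  simp only [h0, h1, h2, h3, h4, g0, g1, g2, g3, g4, mf, mc, gf]; ring
lemma J9_mc (H : CharOK K) (b : K) :
    shJ9 (model (70 * b)) = 36 * b * ((1 - 25 * b ^ 2) / 3) ^ 4 := by
  rw [model_eq, J9_bform H]
  obtain ⟨h0, h1, h2, h3, h4⟩ := kf_mc H b
  obtain ⟨g0, g1, g2, g3, g4⟩ := hf_mc H b
  simp only [h0, h1, h2, h3, h4, g0, g1, g2, g3, g4, mf, mc]; ring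
lemma J10_mc (H : CharOK K) (b : K) :
    shJ10 (model (70 * b)) = 36 * ((1 + 45 * b ^ 2) / 35) * ((1 - 25 * b ^ 2) / 3) ^ 4 := by
  rw [model_eq, J10_bform H]
  obtain ⟨h0, h1, h2, h3, h4⟩ := kf_mc H b
  obtain ⟨g0, g1, g2, g3, g4⟩ := hf_mc H b
  simp only [h0, h1, h2, h3, h4, g0, g1, g2, g3, g4, mf, mc, gf]; ring

lemma CharOK.h35 (H : CharOK K) : (35 : K) ≠ 0 := by
  rw [show (35 : K) = 5 * 7 by norm_num]; exact mul_ne_zero H.h5 H.h7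

lemma RelF_mc (H : CharOK K) (b : K) : RelF (model (70 * b)) := by
  unfold RelF D8rel
  rw [J2_mc H, J3_mc H, J4_mc H, J5_mc H, J6_mc H, J7_mc H, J8_mc H, J9_mc H, J10_mc H]
  have := H.h3; have := H.h35
  refine ⟨?_, ?_, ?_, ?_, ?_, ?_, ?_, ?_, ?_⟩ <;> (field_simp; ring)

lemma a4gen_mc (H : CharOK K) (b d : K) (hd : d ≠ 0)
    (hne : 30 * (d ^ 3 * shJ3 (model (70 * b))) ^ 2 ≠ (d ^ 2 * shJ2 (model (70 * b))) ^ 3) :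
    a4gen (d ^ 2 * shJ2 (model (70 * b))) (d ^ 3 * shJ3 (model (70 * b)))
      (d ^ 4 * shJ4 (model (70 * b))) (d ^ 5 * shJ5 (model (70 * b))) = d * (70 * b) := by
  have h2 := H.h2
  have hne' : 2 * (d ^ 2 * shJ2 (model (70 * b))) ^ 3 - 60 * (d ^ 3 * shJ3 (model (70 * b))) ^ 2 ≠ 0 := by
    intro h
    apply hne
    apply mul_left_cancel₀ h2
    linear_combination -h
  unfold a4gen
  rw [div_eq_iff hne', J2_mc H, J3_mc H, J4_mc H, J5_mc H]
  have := H.h3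
  field_simp
  ring

lemma a4spec_mc (H : CharOK K) (b d : K) (hd : d ≠ 0)
    (hne : d ^ 4 * shJ4 (model (70 * b)) ≠ 0) :
    a4spec (d ^ 4 * shJ4 (model (70 * b))) (d ^ 5 * shJ5 (model (70 * b))) = d * (70 * b) := by
  unfold a4spec
  rw [div_eq_iff (mul_ne_zero H.h3 hne), J4_mc H, J5_mc H]
  ring

lemma a0of_mc (H : CharOK K) (b d : K) :
    a0of (d ^ 2 * shJ2 (model (70 * b))) (d * (70 * b)) = d ^ 2 := by
  unfold a0of
  have h140 : (140 : K) ≠ 0 := by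
    rw [show (140 : K) = 2 ^ 2 * 35 by norm_num]; exact mul_ne_zero (pow_ne_zero _ H.h2) H.h35
  have := H.h2
  rw [J2_mc H]
  field_simp
  ring

lemma model_scale (M : Matrix (Fin 2) (Fin 2) K) (hM : M.det ≠ 0) (a : K) :
    ∃ N : Matrix (Fin 2) (Fin 2) K, IsUnit N.det ∧ lsub M (model a) =
      lsub N (X 0 ^ 8 + C (M.det ^ 4 * a) * X 0 ^ 4 * X 1 ^ 4 + C ((M.det ^ 4) ^ 2) * X 1 ^ 8) := by
  refine ⟨!![1, 0; 0, M.det⁻¹] * M, ?_, ?_⟩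
  · rw [Matrix.det_mul, Matrix.det_fin_two_of]
    simp [hM]
  · rw [← lsub_lsub]
    congr 1
    simp only [lsub_add, lsub_mul, lsub_pow, lsub_C, lsub_X, model]
    have h1 : (C (M.det) : MvPolynomial (Fin 2) K) * C (M.det⁻¹) = 1 := by
      rw [← C_mul, mul_inv_cancel₀ hM, C_1]
    generalize M.det = D at *
    simp
    have e4 : (C D * C D⁻¹ : MvPolynomial (Fin 2) K) ^ 4 = 1 := by rw [h1, one_pow]
    have e8 : (C D * C D⁻¹ : MvPolynomial (Fin 2) K) ^ 8 = 1 := by rw [h1, one_pow]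
    linear_combination (-(C a * X 0 ^ 4 * X 1 ^ 4)) * e4 - X 1 ^ 8 * e8

/-- Equivalence to a model form. -/
def Eqv (f : MvPolynomial (Fin 2) K) : Prop :=
  ∃ (a : K) (M : Matrix (Fin 2) (Fin 2) K), IsUnit M.det ∧ f = lsub M (model a)

theorem final_of (H : CharOK K) (f : MvPolynomial (Fin 2) K) (hmain : RelF f → Eqv f) :
    (Eqv f ↔ RelF f) ∧ (RelF f →
      (30 * shJ3 f ^ 2 ≠ shJ2 f ^ 3 →
        ∃ M : Matrix (Fin 2) (Fin 2) K, IsUnit M.det ∧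
          f = lsub M
            (X 0 ^ 8 + C (a4gen (shJ2 f) (shJ3 f) (shJ4 f) (shJ5 f)) * X 0 ^ 4 * X 1 ^ 4 +
              C (a0of (shJ2 f) (a4gen (shJ2 f) (shJ3 f) (shJ4 f) (shJ5 f))) * X 1 ^ 8)) ∧
      (30 * shJ3 f ^ 2 = shJ2 f ^ 3 → shJ4 f ≠ 0 →
        ∃ M : Matrix (Fin 2) (Fin 2) K, IsUnit M.det ∧
          f = lsub M
            (X 0 ^ 8 + C (a4spec (shJ4 f) (shJ5 f)) * X 0 ^ 4 * X 1 ^ 4 +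
              C (a0of (shJ2 f) (a4spec (shJ4 f) (shJ5 f))) * X 1 ^ 8))) := by
  have h70 : (70 : K) ≠ 0 := by
    rw [show (70 : K) = 2 * 35 by norm_num]; exact mul_ne_zero H.h2 H.h35
  have hb : ∀ a : K, ∃ b, a = 70 * b := fun a => ⟨a / 70, by field_simp⟩
  refine ⟨⟨?_, hmain⟩, ?_⟩
  · rintro ⟨a, M, hM, rfl⟩
    obtain ⟨b, rfl⟩ := hb a
    exact RelF_lsub M _ (RelF_mc H b)
  · intro hr
    obtain ⟨a, M, hM, rfl⟩ := hmain hr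
    obtain ⟨b, rfl⟩ := hb a
    have hM' := isUnit_iff_ne_zero.1 hM
    have hd : M.det ^ 4 ≠ 0 := pow_ne_zero _ hM'
    rw [shJ2_lsub, shJ3_lsub, shJ4_lsub, shJ5_lsub]
    constructor
    · intro hne
      rw [a4gen_mc H b _ hd hne, a0of_mc H]
      exact model_scale M hM' _
    · intro _ hne
      rw [a4spec_mc H b _ hd hne, a0of_mc H]
      exact model_scale M hM' _

lemma coreN (H : CharOK K) (x y b p q : K) (hx : x ≠ 0) (hy : y ≠ 0)
    (k0 : 2 * p - 18 * x * y + 30 * y ^ 2 * b - 10 * y = 0)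
    (k1 : 3 * p * y - 30 * x ^ 2 + 18 * x * y ^ 2 - 5 * b * x * y = 0)
    (k4 : 2 * y ^ 2 * x * q - 18 * y + 30 * b * x - 10 * x * y = 0)
    (k3 : 3 * x ^ 2 * y * q - 30 * y ^ 2 + 18 * x - 5 * b * x * y = 0)
    (hj : p * (x - y ^ 2) + q * (y ^ 2 - x) * x * y ^ 2 - 4 * x ^ 2 * y - 4 * y ^ 3 + 4 * x * y ^ 3
      + 4 * x * y = 0)
    (hk : p * q - 16 - 25 * b ^ 2 ≠ 0) : False := by
  have h2 := H.h2; have h3 := H.h3; have h5 := H.h5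
  have hp : p = 9 * x * y - 15 * y ^ 2 * b + 5 * y := by
    apply mul_left_cancel₀ h2; linear_combination k0
  have hq : q * (x * y ^ 2) = 9 * y - 15 * b * x + 5 * x * y := by
    apply mul_left_cancel₀ h2; linear_combination k4
  have e1 : 9 * x * y ^ 2 - 9 * y ^ 3 * b + 3 * y ^ 2 - 6 * x ^ 2 - b * x * y = 0 := by
    apply mul_left_cancel₀ h5; rw [hp] at k1; linear_combination k1
  have e2 : 9 * x * y - 9 * b * x ^ 2 + 3 * x ^ 2 * y - 6 * y ^ 3 - b * x * y ^ 2 = 0 := by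
    apply mul_left_cancel₀ h5; linear_combination y * k3 - 3 * x * hq
  have e3 : 15 * b * (x - y ^ 2) ^ 2 = 0 := by
    rw [hp] at hj; linear_combination hj + (x - y ^ 2) * hq
  have e4 : b * (x - y ^ 2) ^ 2 = 0 := by
    apply mul_left_cancel₀ h5; apply mul_left_cancel₀ h3; linear_combination e3
  have caseA : x ≠ y ^ 2 := by
    rintro rfl
    have e5 : 10 * b * y = 3 * y ^ 2 + 3 := by
      apply mul_left_cancel₀ (pow_ne_zero 2 hy); linear_combination - e1
    apply hk
    apply mul_left_cancel₀ (mul_ne_zero (mul_ne_zero h2 h2) (pow_ne_zero 4 hy))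
    rw [hp]
    have hq' : q * y ^ 3 = 9 - 15 * b * y + 5 * y ^ 2 := by
      apply mul_left_cancel₀ hy; linear_combination hq
    have hb : 2 * (q * y ^ 3) = 9 + y ^ 2 := by
      linear_combination 2 * hq' - 3 * e5
    have hp' : 2 * (9 * y ^ 2 * y - 15 * y ^ 2 * b + 5 * y) = 9 * y ^ 3 + y := by
      linear_combination - 3 * y * e5
    linear_combination y * (2 * (q * y ^ 3)) * hp' + y * (9 * y ^ 3 + y) * hb
      - y ^ 2 * (10 * b * y + 3 * y ^ 2 + 3) * e5
  rcases mul_eq_zero.1 e4 with hb | hb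
  · subst hb
    have f1 : 3 * x * y ^ 2 + y ^ 2 = 2 * x ^ 2 := by
      apply mul_left_cancel₀ h3; linear_combination e1
    have f2 : 3 * x + x ^ 2 = 2 * y ^ 2 := by
      apply mul_left_cancel₀ h3; apply mul_left_cancel₀ hy; linear_combination e2
    have f3 : (x + 1) ^ 2 = 0 := by
      apply mul_left_cancel₀ h3; apply mul_left_cancel₀ hx
      linear_combination 2 * f1 + (3 * x + 1) * f2
    have f4 : x = -1 := by
      have := pow_eq_zero_iff (two_ne_zero) |>.1 f3
      linear_combination this
    apply caseA
    apply mul_left_cancel₀ h2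
    rw [f4] at f2 ⊢
    linear_combination f2
  · have := pow_eq_zero_iff (two_ne_zero) |>.1 hb
    exact caseA (by linear_combination this)

lemma coreT [IsAlgClosed K] (H : CharOK K) (c0 c1 c2 c3 b c5 c6 c7 c8 t : K) (ht : t ≠ 0)
    (p1 : c1 * c7 = 9 * t) (p2 : c2 * c6 = 4 * t) (p3 : c3 * c5 = t)
    (k0 : c0 * c6 - 6 * c1 * c5 + 15 * c2 * b - 10 * c3 ^ 2 = 0)
    (k1 : c0 * c7 - 5 * c1 * c6 + 9 * c2 * c5 - 5 * c3 * b = 0)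
    (k3 : c1 * c8 - 5 * c2 * c7 + 9 * c3 * c6 - 5 * b * c5 = 0)
    (k4 : c2 * c8 - 6 * c3 * c7 + 15 * b * c6 - 10 * c5 ^ 2 = 0)
    (hj : - 24*c0*c5*c7 + 18*c0*c6^2 - 24*c1*c3*c8 - 48*c1*c5*c6 - 48*c2*c3*c7 + 144*c2*c5^2
      + 18*c2^2*c8 + 144*c3^2*c6 = 0)
    (hk : c0 * c8 - 2 * c1 * c7 - 8 * c2 * c6 + 34 * c3 * c5 - 25 * b ^ 2 ≠ 0) : False := by
  have h2 := H.h2; have h3 := H.h3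
  have n3 : c3 ≠ 0 := by rintro rfl; apply ht; rw [← p3, zero_mul]
  have n1 : c1 ≠ 0 := by
    rintro rfl; apply ht; apply mul_left_cancel₀ (mul_ne_zero h3 h3); linear_combination -p1
  have n2 : c2 ≠ 0 := by
    rintro rfl; apply ht; apply mul_left_cancel₀ (mul_ne_zero h2 h2); linear_combination -p2
  obtain ⟨l, hl⟩ := IsAlgClosed.exists_pow_nat_eq t (n := 2) (by norm_num)
  have nl : l ≠ 0 := by rintro rfl; apply ht; rw [← hl]; ring
  obtain ⟨m, hm⟩ : ∃ m, m = c3 / l := ⟨_, rfl⟩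
  have nm : m ≠ 0 := by rw [hm]; exact div_ne_zero n3 nl
  have e3 : c3 = l * m := by rw [hm]; field_simp
  have e5 : c5 = l / m := by
    rw [eq_div_iff nm]; apply mul_left_cancel₀ nl; rw [e3] at p3; linear_combination p3 - hl
  obtain ⟨x, hx⟩ : ∃ x, x = c1 / (3 * l * m ^ 3) := ⟨_, rfl⟩
  have e1 : c1 = 3 * l * m ^ 3 * x := by rw [hx]; field_simp
  have nx : x ≠ 0 := by rintro rfl; apply n1; rw [e1]; ring
  obtain ⟨y, hy⟩ : ∃ y, y = c2 / (2 * l * m ^ 2) := ⟨_, rfl⟩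
  have e2 : c2 = 2 * l * m ^ 2 * y := by rw [hy]; field_simp
  have ny : y ≠ 0 := by rintro rfl; apply n2; rw [e2]; ring
  have e7 : c7 = 3 * l / (m ^ 3 * x) := by
    rw [eq_div_iff (by positivity)]
    apply mul_left_cancel₀ (mul_ne_zero h3 nl)
    rw [e1] at p1; linear_combination p1 - 9 * hl
  have e6 : c6 = 2 * l / (m ^ 2 * y) := by
    rw [eq_div_iff (by positivity)]
    apply mul_left_cancel₀ (mul_ne_zero h2 nl)
    rw [e2] at p2; linear_combination p2 - 4 * hl
  obtain ⟨B, hB⟩ : ∃ B, b = l * B := ⟨b / l, by field_simp⟩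
  obtain ⟨p, hp⟩ : ∃ p, c0 = l * m ^ 4 * p := ⟨c0 / (l * m ^ 4), by field_simp⟩
  obtain ⟨q, hq⟩ : ∃ q, c8 = l / m ^ 4 * q := ⟨c8 / (l / m ^ 4), by field_simp⟩
  clear hm hx hy p1 p2 p3
  subst e3 e5 e1 e2 e7 e6 hB hp hq
  apply coreN H x y B p q nx ny
  · field_simp at k0
    apply mul_left_cancel₀ (mul_ne_zero (pow_ne_zero 2 nl) (pow_ne_zero 2 nm))
    linear_combination k0
  · field_simp at k1
    apply mul_left_cancel₀ (mul_ne_zero (pow_ne_zero 2 nl) nm)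
    linear_combination k1
  · field_simp at k4
    apply mul_left_cancel₀ (pow_ne_zero 2 nl)
    linear_combination k4
  · field_simp at k3
    apply mul_left_cancel₀ (pow_ne_zero 2 nl)
    linear_combination k3
  · field_simp at hj
    apply mul_left_cancel₀ (mul_ne_zero (pow_ne_zero 3 nl)
      (mul_ne_zero (pow_ne_zero 3 h2) (pow_ne_zero 2 h3)))
    linear_combination hj
  · intro h
    apply hk
    field_simp
    linear_combination l ^ 2 * h

lemma core0 (H : CharOK K) (c0 c1 c2 c3 b c5 c6 c7 c8 : K)
    (p1 : c1 * c7 = 0) (p2 : c2 * c6 = 0) (p3 : c3 * c5 = 0)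
    (k0 : c0 * c6 - 6 * c1 * c5 + 15 * c2 * b - 10 * c3 ^ 2 = 0)
    (k1 : c0 * c7 - 5 * c1 * c6 + 9 * c2 * c5 - 5 * c3 * b = 0)
    (k3 : c1 * c8 - 5 * c2 * c7 + 9 * c3 * c6 - 5 * b * c5 = 0)
    (k4 : c2 * c8 - 6 * c3 * c7 + 15 * b * c6 - 10 * c5 ^ 2 = 0)
    (n0 : c0 ≠ 0) (n8 : c8 ≠ 0) (h5 : c5 = 0) :
    c1 = 0 ∧ c2 = 0 ∧ c3 = 0 ∧ c5 = 0 ∧ c6 = 0 ∧ c7 = 0 := by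
  have H2 := H.h2; have H3 := H.h3; have H5 := H.h5
  subst h5
  have h6 : c6 = 0 := by
    by_contra n6
    have z2 : c2 = 0 := by simpa [n6] using p2
    subst z2
    have n3 : c3 ≠ 0 := by
      rintro rfl
      exact mul_ne_zero n0 n6 (by linear_combination k0)
    have n1 : c1 ≠ 0 := by
      rintro rfl
      exact mul_ne_zero (mul_ne_zero (mul_ne_zero H3 H3) n3) n6 (by linear_combination k3)
    have z7 : c7 = 0 := by simpa [n1] using p1
    subst z7
    have zb : b = 0 := by
      by_contra nb
      exact mul_ne_zero (mul_ne_zero (mul_ne_zero H3 H5) nb) n6 (by linear_combination k4)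
    subst zb
    exact mul_ne_zero (mul_ne_zero H5 n1) n6 (by linear_combination -k1)
  subst h6
  have h7 : c7 = 0 := by
    by_contra n7
    have z1 : c1 = 0 := by simpa [n7] using p1
    subst z1
    have z2 : c2 = 0 := by
      by_contra n2
      exact mul_ne_zero (mul_ne_zero H5 n2) n7 (by linear_combination -k3)
    subst z2
    have z3 : c3 = 0 := by
      by_contra n3
      exact mul_ne_zero (mul_ne_zero (mul_ne_zero H2 H3) n3) n7 (by linear_combination -k4)
    subst z3
    exact mul_ne_zero n0 n7 (by linear_combination k1)
  subst h7
  have z2 : c2 = 0 := by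
    have : c2 * c8 = 0 := by linear_combination k4
    simpa [n8] using this
  have z1 : c1 = 0 := by
    have : c1 * c8 = 0 := by linear_combination k3
    simpa [n8] using this
  subst z2 z1
  have z3 : c3 = 0 := by
    by_contra n3
    exact mul_ne_zero (mul_ne_zero H2 H5) (pow_ne_zero 2 n3) (by linear_combination -k0)
  exact ⟨rfl, rfl, z3, rfl, rfl, rfl⟩

lemma core00 (H : CharOK K) (c1 c2 c3 b c5 c6 c7 c8 : K)
    (p1 : c1 * c7 = 0) (p2 : c2 * c6 = 0) (p3 : c3 * c5 = 0)
    (k0 : - 6 * c1 * c5 + 15 * c2 * b - 10 * c3 ^ 2 = 0)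
    (k1 : - 5 * c1 * c6 + 9 * c2 * c5 - 5 * c3 * b = 0)
    (k3 : c1 * c8 - 5 * c2 * c7 + 9 * c3 * c6 - 5 * b * c5 = 0)
    (n1 : c1 ≠ 0) (nb : b ≠ 0) (n8 : c7 = 0 → c8 ≠ 0) : False := by
  have H2 := H.h2; have H3 := H.h3; have H5 := H.h5
  have z7 : c7 = 0 := by simpa [n1] using p1
  have n8' := n8 z7
  subst z7
  by_cases z3 : c3 = 0
  · subst z3
    by_cases z2 : c2 = 0
    · subst z2
      have z5 : c5 = 0 := by
        by_contra n5
        exact mul_ne_zero (mul_ne_zero (mul_ne_zero H2 H3) n1) n5 (by linear_combination -k0)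
      subst z5
      exact mul_ne_zero n1 n8' (by linear_combination k3)
    · have z6 : c6 = 0 := by simpa [z2] using p2
      subst z6
      have z5 : c5 = 0 := by
        by_contra n5
        exact mul_ne_zero (mul_ne_zero (mul_ne_zero H3 H3) z2) n5 (by linear_combination k1)
      subst z5
      exact mul_ne_zero (mul_ne_zero (mul_ne_zero H3 H5) z2) nb (by linear_combination k0)
  · have z5 : c5 = 0 := by simpa [z3] using p3
    subst z5
    have z2 : c2 ≠ 0 := by
      rintro rfl
      exact mul_ne_zero (mul_ne_zero H2 H5) (pow_ne_zero 2 z3) (by linear_combination -k0)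
    have z6 : c6 = 0 := by simpa [z2] using p2
    subst z6
    exact mul_ne_zero (mul_ne_zero H5 z3) nb (by linear_combination -k1)

lemma coreA [IsAlgClosed K] (H : CharOK K) (c0 c1 c2 c3 b c5 c6 c7 c8 t : K)
    (p1 : c1 * c7 = 9 * t) (p2 : c2 * c6 = 4 * t) (p3 : c3 * c5 = t)
    (k0 : c0 * c6 - 6 * c1 * c5 + 15 * c2 * b - 10 * c3 ^ 2 = 0)
    (k1 : c0 * c7 - 5 * c1 * c6 + 9 * c2 * c5 - 5 * c3 * b = 0)
    (k3 : c1 * c8 - 5 * c2 * c7 + 9 * c3 * c6 - 5 * b * c5 = 0)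
    (k4 : c2 * c8 - 6 * c3 * c7 + 15 * b * c6 - 10 * c5 ^ 2 = 0)
    (hj : - 24*c0*c5*c7 + 18*c0*c6^2 - 24*c1*c3*c8 - 48*c1*c5*c6 - 48*c2*c3*c7 + 144*c2*c5^2
      + 18*c2^2*c8 + 144*c3^2*c6 = 0)
    (hk : c0 * c8 - 2 * c1 * c7 - 8 * c2 * c6 + 34 * c3 * c5 - 25 * b ^ 2 ≠ 0)
    (s0 : c0 = 0 → c1 ≠ 0) (s8 : c8 = 0 → c7 ≠ 0) :
    c1 = 0 ∧ c2 = 0 ∧ c3 = 0 ∧ c5 = 0 ∧ c6 = 0 ∧ c7 = 0 := by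
  by_cases ht : t = 0
  · subst ht
    rw [mul_zero] at p1 p2
    by_cases z0 : c0 = 0
    · exfalso
      have n1 := s0 z0
      subst z0
      have nb : b ≠ 0 := by
        rintro rfl; apply hk; linear_combination -2 * p1 - 8 * p2 + 34 * p3
      exact core00 H c1 c2 c3 b c5 c6 c7 c8 p1 p2 p3 (by linear_combination k0)
        (by linear_combination k1) k3 n1 nb (fun h h' => s8 h' h)
    by_cases z8 : c8 = 0
    · exfalso
      have n7 := s8 z8
      subst z8
      have nb : b ≠ 0 := by
        rintro rfl; apply hk; linear_combination -2 * p1 - 8 * p2 + 34 * p3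
      exact core00 H c7 c6 c5 b c3 c2 c1 c0 (by linear_combination p1) (by linear_combination p2)
        (by linear_combination p3) (by linear_combination k4)
        (by linear_combination k3) (by linear_combination k1) n7 nb (fun h h' => s0 h' h)
    by_cases z5 : c5 = 0
    · exact core0 H c0 c1 c2 c3 b c5 c6 c7 c8 p1 p2 p3 k0 k1 k3 k4 z0 z8 z5
    · have z3 : c3 = 0 := by simpa [z5] using p3
      obtain ⟨h1, h2, h3, h4, h5, h6⟩ := core0 H c8 c7 c6 c5 b c3 c2 c1 c0
        (by linear_combination p1) (by linear_combination p2)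
        (by linear_combination p3) (by linear_combination k4)
        (by linear_combination k3) (by linear_combination k1) (by linear_combination k0) z8 z0 z3
      exact ⟨h6, h5, h4, h3, h2, h1⟩
  · exact (coreT H c0 c1 c2 c3 b c5 c6 c7 c8 t ht p1 p2 p3 k0 k1 k3 k4 hj hk).elim

/-- Consequences of the nine relations when `j4 = 6k²`, `j6 = -6k³`. -/
lemma rel_consequences (H : CharOK K) {j2 j3 j4 j5 j6 j7 j8 j9 j10 k : K}
    (h : D8rel j2 j3 j4 j5 j6 j7 j8 j9 j10) (hk : k ≠ 0) (h4 : j4 = 6 * k ^ 2)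
    (h6 : j6 = -6 * k ^ 3) :
    j5 * (j2 + 3 * k) = 18 * k ^ 2 * j3 ∧ j7 = - k * j5 ∧ j9 = k ^ 2 * j5 ∧
      35 * j8 = 18 * k ^ 4 - 21 * k ^ 3 * j2 ∧ 5 * j5 ^ 2 = 54 * k ^ 4 * (j2 - 6 * k) := by
  obtain ⟨r1, r2, r3, r4, r5, r6, r7, r8, r9⟩ := h
  subst h4 h6
  have h2 := H.h2; have h3 := H.h3; have h5 := H.h5
  have q3 : 30 * j3 ^ 2 = j2 ^ 3 - 27 * k ^ 2 * j2 - 54 * k ^ 3 := by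
    apply mul_left_cancel₀ h2; linear_combination -r5
  have q2 : 60 * j5 * j3 = 36 * k ^ 2 * (j2 - 6 * k) * (j2 + 3 * k) := by
    linear_combination r2 + 2 * j2 * q3
  have q4 : (j2 - 3 * k) * (j5 * (j2 + 3 * k) - 18 * k ^ 2 * j3) = 0 := by
    apply mul_left_cancel₀ h2; linear_combination -r3 + 2 * j3 * q3
  have main : j5 * (j2 + 3 * k) = 18 * k ^ 2 * j3 := by
    rcases mul_eq_zero.1 q4 with h | h
    · have e2 : j2 = 3 * k := by linear_combination h
      subst e2
      have n3 : j3 ≠ 0 := by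
        rintro rfl
        apply pow_ne_zero 3 hk
        apply mul_left_cancel₀ (mul_ne_zero (pow_ne_zero 2 h2) (pow_ne_zero 3 h3))
        linear_combination q3
      apply mul_left_cancel₀ n3
      apply mul_left_cancel₀ (mul_ne_zero h5 h2)
      linear_combination k * q2 - 6 * k ^ 2 * q3
    · linear_combination h
  have e7 : j7 = - k * j5 := by
    apply mul_left_cancel₀ h3; linear_combination r6 + main
  refine ⟨main, e7, ?_, ?_, ?_⟩
  · apply mul_left_cancel₀ (mul_ne_zero h2 (mul_ne_zero h3 h3))
    linear_combination r8 - 2 * j3 * q3 + 2 * (j2 - 3 * k) * main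
  · apply mul_left_cancel₀ (mul_ne_zero (mul_ne_zero h2 h2) (mul_ne_zero h3 h3))
    linear_combination r7 + 14 * j2 * q3
  · linear_combination r4 + 6 * k ^ 2 * q3

lemma lsub_n4 (M : Matrix (Fin 2) (Fin 2) K) : lsub M (4 : MvPolynomial (Fin 2) K) = 4 := by
  unfold lsub; exact map_ofNat (bind₁ _) 4
lemma lsub_n6 (M : Matrix (Fin 2) (Fin 2) K) : lsub M (6 : MvPolynomial (Fin 2) K) = 6 := by
  unfold lsub; exact map_ofNat (bind₁ _) 6
lemma lsub_n8 (M : Matrix (Fin 2) (Fin 2) K) : lsub M (8 : MvPolynomial (Fin 2) K) = 8 := by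
  unfold lsub; exact map_ofNat (bind₁ _) 8
lemma lsub_n28 (M : Matrix (Fin 2) (Fin 2) K) : lsub M (28 : MvPolynomial (Fin 2) K) = 28 := by
  unfold lsub; exact map_ofNat (bind₁ _) 28
lemma lsub_n56 (M : Matrix (Fin 2) (Fin 2) K) : lsub M (56 : MvPolynomial (Fin 2) K) = 56 := by
  unfold lsub; exact map_ofNat (bind₁ _) 56
lemma lsub_n70 (M : Matrix (Fin 2) (Fin 2) K) : lsub M (70 : MvPolynomial (Fin 2) K) = 70 := by
  unfold lsub; exact map_ofNat (bind₁ _) 70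

/-- Squarefree octics satisfying the relations. -/
structure Good (f : MvPolynomial (Fin 2) K) : Prop where
  hom : f.IsHomogeneous 8
  sqf : Squarefree f
  rel : RelF f

lemma Good.lsub {M : Matrix (Fin 2) (Fin 2) K} (hM : M.det ≠ 0) {f : MvPolynomial (Fin 2) K}
    (h : Good f) : Good (lsub M f) :=
  ⟨lsub_hom M h.hom, lsub_sqf hM h.sqf, RelF_lsub M f h.rel⟩

lemma Eqv.of_lsub {M : Matrix (Fin 2) (Fin 2) K} (hM : M.det ≠ 0) {f : MvPolynomial (Fin 2) K}
    (h : Eqv (lsub M f)) : Eqv f := by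
  obtain ⟨a, N, hN, e⟩ := h
  refine ⟨a, N * M⁻¹, ?_, ?_⟩
  · rw [Matrix.det_mul]
    exact hN.mul (Matrix.isUnit_nonsing_inv_det _ (isUnit_iff_ne_zero.2 hM))
  · rw [← lsub_lsub, ← e, lsub_inv_left hM]

lemma isUnit_X_false (j : Fin 2) (h : IsUnit (X j : MvPolynomial (Fin 2) K)) : False := by
  have := h.map (constantCoeff : MvPolynomial (Fin 2) K →+* K)
  simp at this

lemma sqf_ne78 {c : ℕ → K} (h : Squarefree (bform 8 c)) (h8 : c 8 = 0) : c 7 ≠ 0 := by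
  intro h7
  apply isUnit_X_false (K := K) 0
  apply h
  rw [bform8, h7, h8]
  refine ⟨C (c 0) * X 0 ^ 6 + 8 * C (c 1) * (X 0 ^ 5 * X 1) +
    28 * C (c 2) * (X 0 ^ 4 * X 1 ^ 2) + 56 * C (c 3) * (X 0 ^ 3 * X 1 ^ 3) +
    70 * C (c 4) * (X 0 ^ 2 * X 1 ^ 4) + 56 * C (c 5) * (X 0 * X 1 ^ 5) +
    28 * C (c 6) * X 1 ^ 6, ?_⟩
  simp only [C_0]
  ring

lemma sqf_ne01 {c : ℕ → K} (h : Squarefree (bform 8 c)) (h0 : c 0 = 0) : c 1 ≠ 0 := by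
  intro h1
  apply isUnit_X_false (K := K) 1
  apply h
  rw [bform8, h0, h1]
  refine ⟨28 * C (c 2) * (X 0 ^ 6) + 56 * C (c 3) * (X 0 ^ 5 * X 1) +
    70 * C (c 4) * (X 0 ^ 4 * X 1 ^ 2) + 56 * C (c 5) * (X 0 ^ 3 * X 1 ^ 3) +
    28 * C (c 6) * (X 0 ^ 2 * X 1 ^ 4) + 8 * C (c 7) * (X 0 * X 1 ^ 5) + C (c 8) * X 1 ^ 6, ?_⟩
  simp only [C_0]
  ring

lemma move (H : CharOK K) {c : ℕ → K} (h : Good (bform 8 c)) (M : Matrix (Fin 2) (Fin 2) K)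
    (hM : M.det ≠ 0) : ∃ c', lsub M (bform 8 c) = bform 8 c' ∧ Good (bform 8 c') ∧
      C (M.det ^ 6) * lsub M (bform 4 (kf c)) = bform 4 (kf c') ∧
      (Eqv (bform 8 c') → Eqv (bform 8 c)) := by
  obtain ⟨c', hc⟩ := exists_bform H.f8 (h.lsub hM).hom
  refine ⟨c', hc, by rw [← hc]; exact h.lsub hM, ?_, fun h' => Eqv.of_lsub hM (by rw [hc]; exact h')⟩
  rw [← covK_bform H, ← covK_bform H, ← hc, covK_lsub]

/-- coefficients after a shear, degree 4 -/
def sh4 (t : K) (c : ℕ → K) : ℕ → K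
  | 0 => c 0 + 4 * t * c 1 + 6 * t ^ 2 * c 2 + 4 * t ^ 3 * c 3 + t ^ 4 * c 4
  | 1 => c 1 + 3 * t * c 2 + 3 * t ^ 2 * c 3 + t ^ 3 * c 4
  | 2 => c 2 + 2 * t * c 3 + t ^ 2 * c 4
  | 3 => c 3 + t * c 4
  | 4 => c 4
  | _ => 0

lemma shear4 (t : K) (c : ℕ → K) : lsub !![1, 0; t, 1] (bform 4 c) = bform 4 (sh4 t c) := by
  rw [bform4, bform4]
  simp only [lsub_add, lsub_mul, lsub_pow, lsub_C, lsub_X, lsub_n4, lsub_n6, lsub_n8,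
    lsub_n28, lsub_n56, lsub_n70]
  simp [sh4, map_ofNat]
  ring

/-- coefficients after a shear, degree 8 -/
def sh8 (t : K) (c : ℕ → K) : ℕ → K
  | 0 => c 0 + 8 * t * c 1 + 28 * t ^ 2 * c 2 + 56 * t ^ 3 * c 3 + 70 * t ^ 4 * c 4
      + 56 * t ^ 5 * c 5 + 28 * t ^ 6 * c 6 + 8 * t ^ 7 * c 7 + t ^ 8 * c 8
  | 1 => c 1 + 7 * t * c 2 + 21 * t ^ 2 * c 3 + 35 * t ^ 3 * c 4 + 35 * t ^ 4 * c 5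
      + 21 * t ^ 5 * c 6 + 7 * t ^ 6 * c 7 + t ^ 7 * c 8
  | 2 => c 2 + 6 * t * c 3 + 15 * t ^ 2 * c 4 + 20 * t ^ 3 * c 5 + 15 * t ^ 4 * c 6
      + 6 * t ^ 5 * c 7 + t ^ 6 * c 8
  | 3 => c 3 + 5 * t * c 4 + 10 * t ^ 2 * c 5 + 10 * t ^ 3 * c 6 + 5 * t ^ 4 * c 7 + t ^ 5 * c 8
  | 4 => c 4 + 4 * t * c 5 + 6 * t ^ 2 * c 6 + 4 * t ^ 3 * c 7 + t ^ 4 * c 8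
  | 5 => c 5 + 3 * t * c 6 + 3 * t ^ 2 * c 7 + t ^ 3 * c 8
  | 6 => c 6 + 2 * t * c 7 + t ^ 2 * c 8
  | 7 => c 7 + t * c 8
  | 8 => c 8
  | _ => 0

lemma shear8 (t : K) (c : ℕ → K) : lsub !![1, 0; t, 1] (bform 8 c) = bform 8 (sh8 t c) := by
  rw [bform8, bform8]
  simp only [lsub_add, lsub_mul, lsub_pow, lsub_C, lsub_X, lsub_n4, lsub_n6, lsub_n8,
    lsub_n28, lsub_n56, lsub_n70]
  simp [sh8, map_ofNat]
  ring

lemma shear (H : CharOK K) {c : ℕ → K} (h : Good (bform 8 c)) (t : K) :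
    ∃ c', Good (bform 8 c') ∧ (∀ i ≤ 8, c' i = sh8 t c i) ∧ (∀ i ≤ 4, kf c' i = sh4 t (kf c) i) ∧
      (Eqv (bform 8 c') → Eqv (bform 8 c)) := by
  have hd : (!![1, 0; t, 1] : Matrix (Fin 2) (Fin 2) K).det = 1 := by
    rw [Matrix.det_fin_two_of]; ring
  obtain ⟨c', h1, h2, h3, h4⟩ := move H h !![1, 0; t, 1] (by rw [hd]; exact one_ne_zero)
  refine ⟨c', h2, ?_, ?_, h4⟩
  · rw [shear8] at h1
    exact fun i hi => (bform_inj H.f8 h1 i hi).symm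
  · rw [shear4, hd, one_pow, C_1, one_mul] at h3
    exact fun i hi => (bform_inj H.f4 h3 i hi).symm

lemma swap4 (c : ℕ → K) : lsub !![0, 1; 1, 0] (bform 4 c) = bform 4 (fun i => c (4 - i)) := by
  rw [bform4, bform4]
  simp only [lsub_add, lsub_mul, lsub_pow, lsub_C, lsub_X, lsub_n4, lsub_n6, lsub_n8,
    lsub_n28, lsub_n56, lsub_n70]
  simp
  ring

lemma swap (H : CharOK K) {c : ℕ → K} (h : Good (bform 8 c)) :
    ∃ c', Good (bform 8 c') ∧ (∀ i ≤ 4, kf c' i = kf c (4 - i)) ∧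
      (Eqv (bform 8 c') → Eqv (bform 8 c)) := by
  have hd : (!![0, 1; 1, 0] : Matrix (Fin 2) (Fin 2) K).det = -1 := by
    rw [Matrix.det_fin_two_of]; ring
  obtain ⟨c', h1, h2, h3, h4⟩ := move H h !![0, 1; 1, 0] (by rw [hd]; simp)
  refine ⟨c', h2, ?_, h4⟩
  rw [swap4, hd, show (-1 : K) ^ 6 = 1 by norm_num, C_1, one_mul] at h3
  exact fun i hi => (bform_inj H.f4 h3 i hi).symm

lemma eval_bform (n : ℕ) (c : ℕ → K) : eval ![0, 1] (bform n c) = c n := by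
  unfold bform
  rw [map_sum, Finset.sum_eq_single n]
  · simp
  · intro i hi hin
    have := Finset.mem_range.1 hi
    have hni : n - i ≠ 0 := by omega
    simp [hni]
  · intro h; simp at h

lemma exists_root_move [IsAlgClosed K] {n : ℕ} (hn : 0 < n) (c : ℕ → K) :
    ∃ M : Matrix (Fin 2) (Fin 2) K, M.det ≠ 0 ∧ eval ![0, 1] (lsub M (bform n c)) = 0 := by
  by_cases hc : c n = 0
  · exact ⟨1, by simp, by rw [lsub_one, eval_bform, hc]⟩
  · let p : Polynomial K := ∑ i ∈ Finset.range (n + 1), Polynomial.C ((n.choose i : K) * c i) * Polynomial.X ^ i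
    have hp : p.coeff n = c n := by
      simp only [p, Polynomial.finsetSum_coeff, Polynomial.coeff_C_mul_X_pow]
      rw [Finset.sum_eq_single n]
      · simp
      · intro i hi h; rw [if_neg (Ne.symm h)]
      · intro h; simp at h
    have hd : p.degree ≠ 0 := by
      have := Polynomial.le_degree_of_ne_zero (p := p) (n := n) (by rw [hp]; exact hc)
      intro h
      rw [h] at this
      have : n ≤ 0 := by exact_mod_cast this
      omega
    obtain ⟨r, hr⟩ := IsAlgClosed.exists_root p hd
    refine ⟨!![0, 1; 1, r], ?_, ?_⟩
    · rw [Matrix.det_fin_two_of]; simp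
    · have : eval ![0, 1] (lsub !![0, 1; 1, r] (bform n c)) = p.eval r := by
        simp only [lsub, bform, p, map_sum, Polynomial.eval_finset_sum]
        apply Finset.sum_congr rfl
        intro i hi
        simp
      rw [this]; exact hr

lemma scaling [IsAlgClosed K] {c : ℕ → K} (h : Squarefree (bform 8 c))
    (h1 : c 1 = 0) (h2 : c 2 = 0) (h3 : c 3 = 0) (h5 : c 5 = 0) (h6 : c 6 = 0) (h7 : c 7 = 0) :
    Eqv (bform 8 c) := by
  have n0 : c 0 ≠ 0 := fun h0 => sqf_ne01 h h0 h1
  have n8 : c 8 ≠ 0 := fun h8 => sqf_ne78 h h8 h7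
  obtain ⟨x, hx⟩ := IsAlgClosed.exists_pow_nat_eq (c 0) (n := 8) (by norm_num)
  obtain ⟨z, hz⟩ := IsAlgClosed.exists_pow_nat_eq (c 8) (n := 8) (by norm_num)
  have nx : x ≠ 0 := by rintro rfl; apply n0; rw [← hx]; simp
  have nz : z ≠ 0 := by rintro rfl; apply n8; rw [← hz]; simp
  refine ⟨70 * c 4 / (x ^ 4 * z ^ 4), !![x, 0; 0, z], ?_, ?_⟩
  · rw [Matrix.det_fin_two_of, isUnit_iff_ne_zero]; simp [nx, nz]
  · have e : (C (70 * c 4 / (x ^ 4 * z ^ 4)) * C (x ^ 4 * z ^ 4) : MvPolynomial (Fin 2) K)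
        = 70 * C (c 4) := by
      rw [← C_mul, div_mul_cancel₀ _ (by positivity), C_mul]; rfl
    rw [bform8, model, h1, h2, h3, h5, h6, h7, ← hx, ← hz]
    simp only [lsub_add, lsub_mul, lsub_pow, lsub_C, lsub_X]
    generalize C (70 * c 4 / (x ^ 4 * z ^ 4)) = w at *
    simp at e ⊢
    linear_combination - (X 0 ^ 4 * X 1 ^ 4) * e

/-- Consequences of the relations when `j4 = 0`. -/
lemma rel_zero (H : CharOK K) {j2 j3 j4 j5 j6 j7 j8 j9 j10 : K}
    (h : D8rel j2 j3 j4 j5 j6 j7 j8 j9 j10) (h4 : j4 = 0) :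
    j5 = 0 ∧ j7 = 0 ∧ j9 = 0 ∧ 30 * j3 ^ 2 = j2 ^ 3 := by
  obtain ⟨r1, r2, r3, r4, r5, r6, r7, r8, r9⟩ := h
  subst h4
  have h2 := H.h2; have h3 := H.h3; have h5 := H.h5
  have e5 : j5 = 0 := by
    by_contra n
    exact mul_ne_zero h5 (pow_ne_zero 2 n) (by linear_combination r4)
  subst e5
  have e : 30 * j3 ^ 2 = j2 ^ 3 := by
    have : (30 * j3 ^ 2 - j2 ^ 3) ^ 2 = 0 := by
      apply mul_left_cancel₀ (mul_ne_zero h2 h2); linear_combination -r1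
    have := pow_eq_zero_iff (two_ne_zero) |>.1 this
    linear_combination this
  refine ⟨rfl, ?_, ?_, e⟩
  · apply mul_left_cancel₀ h3; linear_combination r6
  · apply mul_left_cancel₀ (mul_ne_zero h2 (mul_ne_zero h3 h3))
    linear_combination r8 - 2 * j3 * e

lemma rel_disc (H : CharOK K) {j2 j3 j4 j5 j6 j7 j8 j9 j10 : K}
    (h : D8rel j2 j3 j4 j5 j6 j7 j8 j9 j10) : j4 ^ 3 = 6 * j6 ^ 2 := by
  obtain ⟨r1, r2, r3, r4, r5, r6, r7, r8, r9⟩ := h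
  have h2 := H.h2; have h3 := H.h3
  apply mul_left_cancel₀ (mul_ne_zero h2 (pow_ne_zero 3 h3))
  linear_combination r1 - (18 * j6 + 9 * j4 * j2 + 60 * j3 ^ 2 - 2 * j2 ^ 3) * r5

/-- The impossible case of a quartic covariant with exactly one double root. -/
lemma L0_bad (H : CharOK K) (c0 c1 c2 c3 c4 c5 v e k j2 j3 g4 g6 g8 : K) (hv : v ≠ 0)
    (he : e ≠ 0) (hk : k ≠ 0)
    (q0 : e = 2 * (- 6 * c1 * c5 + 15 * c2 * c4 - 10 * c3 ^ 2))
    (q1 : c0 * v + 9 * c2 * c5 - 5 * c3 * c4 = 0)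
    (q2 : 3 * k = - 2 * c1 * v + 34 * c3 * c5 - 25 * c4 ^ 2)
    (q3 : c2 * v + c4 * c5 = 0)
    (q4 : 3 * c3 * v + 5 * c5 ^ 2 = 0)
    (hj2 : j2 = 6 * k + 120 * c4 ^ 2)
    (ej2 : j2 = 2 * (- 8 * c1 * v - 56 * c3 * c5 + 35 * c4 ^ 2))
    (hj3 : j3 = 6 * c4 * (3 * k + 40 * c4 ^ 2))
    (ej3 : j3 = - 24*c0*c5*v + 72*c1*c4*v - 48*c2*c3*v + 144*c2*c5^2 - 216*c3*c4*c5 + 90*c4^3)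
    (hg4 : 35 * g4 = 12 * c1 * v - 36 * c3 * c5 + 45 * c4 ^ 2)
    (hg6 : 7 * g6 = - 4 * c3 * v + 12 * c5 ^ 2)
    (hg8 : g8 = - 8 * c5 * v)
    (hj8 : 35 * (-36 * k ^ 3 * g4 + 6 * e * k ^ 2 * g6 + 2 * e ^ 2 * k * g8)
      = 18 * k ^ 4 - 21 * k ^ 3 * j2) : False := by
  have h2 := H.h2; have h3 := H.h3; have h5 := H.h5; have h7 := H.h7
  obtain ⟨u, hu⟩ : ∃ u, c5 = 3 * u * v := ⟨c5 / (3 * v), by field_simp⟩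
  obtain ⟨b, hb⟩ : ∃ b, c4 = b * v := ⟨c4 / v, by field_simp⟩
  subst hu hb
  have e3 : c3 = -15 * v * u ^ 2 := by
    apply mul_left_cancel₀ hv; apply mul_left_cancel₀ h3; linear_combination q4
  subst e3
  have e2 : c2 = -3 * v * b * u := by
    apply mul_left_cancel₀ hv; linear_combination q3
  subst e2
  have e0 : c0 = 6 * v * b * u ^ 2 := by
    apply mul_left_cancel₀ hv; linear_combination q1
  subst e0
  have e1 : c1 = 675 * v * u ^ 3 := by
    apply mul_left_cancel₀ hv; apply mul_left_cancel₀ (mul_ne_zero (mul_ne_zero h2 h2) h3)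
    linear_combination ej2 - hj2 - 2 * q2
  subst e1
  have hk2 : k = v ^ 2 * (-960 * u ^ 3) - 25 * (b * v) ^ 2 / 3 := by
    apply mul_left_cancel₀ h3; field_simp; linear_combination q2
  have bu : b * u ^ 3 = 0 := by
    apply mul_left_cancel₀ (mul_ne_zero (mul_ne_zero (pow_ne_zero 9 h2) (pow_ne_zero 3 h3))
      (mul_ne_zero h5 (pow_ne_zero 3 hv)))
    linear_combination hj3 - ej3 + 6 * b * v * q2
  have nu : u ≠ 0 := by
    rintro rfl; apply he; rw [q0]; ring
  have zb : b = 0 := by simpa [nu] using bu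
  subst zb
  have ek : k = -960 * u ^ 3 * v ^ 2 := by rw [hk2]; ring
  have ee : e = -28800 * u ^ 4 * v ^ 2 := by rw [q0]; ring
  have eg6 : g6 = 24 * u ^ 2 * v ^ 2 := by
    apply mul_left_cancel₀ h7; linear_combination hg6
  have : 2 ^ 25 * 3 ^ 7 * 5 ^ 5 * 7 * (u ^ 12 * v ^ 8) = 0 := by
    have t1 : 35 * (-36 * k ^ 3 * g4 + 6 * e * k ^ 2 * g6 + 2 * e ^ 2 * k * g8) =
      -36 * k ^ 3 * (35 * g4) + 35 * (6 * e * k ^ 2 * g6 + 2 * e ^ 2 * k * g8) := by ring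
    rw [t1, hg4, hj2, hg8, eg6, ee, ek] at hj8
    linear_combination hj8
  have hne : (2 : K) ^ 25 * 3 ^ 7 * 5 ^ 5 * 7 * (u ^ 12 * v ^ 8) ≠ 0 := by positivity
  exact hne this

lemma hf4_L0 (H : CharOK K) {k : ℕ → K} (h1 : k 1 = 0) (h3 : k 3 = 0) (h4 : k 4 = 0) :
    hf4 k 0 = 2 * k 0 * k 2 ∧ hf4 k 1 = 0 ∧ hf4 k 2 = - k 2 ^ 2 ∧ hf4 k 3 = 0 ∧ hf4 k 4 = 0 := by
  have := H.h3
  simp only [hf4, h1, h3, h4]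
  refine ⟨by ring, by ring, ?_, by ring, by ring⟩
  field_simp
  ring

lemma L0 [IsAlgClosed K] (H : CharOK K) {c : ℕ → K} (h : Good (bform 8 c)) (k1 : kf c 1 = 0)
    (k3 : kf c 3 = 0) (k4 : kf c 4 = 0) (k2 : kf c 2 ≠ 0) : Eqv (bform 8 c) := by
  have h2 := H.h2; have h3 := H.h3; have h5 := H.h5; have h7 := H.h7
  have R : D8rel _ _ _ _ _ _ _ _ _ := h.rel
  have s0 := sqf_ne01 h.sqf
  have s8 := sqf_ne78 h.sqf
  obtain ⟨f0, f1, f2, f3, f4⟩ := hf4_L0 H k1 k3 k4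
  have E2 := J2_bform H c
  have E3 := J3_bform H c
  have E4 := J4_bform H c
  have E5 := J5_bform H c
  have E6 := J6_bform H c
  have E7 := J7_bform H c
  have E8 := J8_bform H c
  have E9 := J9_bform H c
  have G4 : 35 * gf c 4 = c 0 * c 8 + 12 * c 1 * c 7 - 22 * c 2 * c 6 - 36 * c 3 * c 5 + 45 * c 4 ^ 2 := by
    have := H.h35
    simp only [gf]; field_simp
  have G6 : 7 * gf c 6 = 3 * c 2 * c 8 - 4 * c 3 * c 7 - 11 * c 4 * c 6 + 12 * c 5 ^ 2 := by
    simp only [gf]; field_simp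
  have G8 : gf c 8 = 2 * c 4 * c 8 - 8 * c 5 * c 7 + 6 * c 6 ^ 2 := rfl
  simp only [f0, f1, f2, f3, f4, k1, k3, k4, mf] at E4 E5 E6 E7 E8 E9
  have Q0 : kf c 0 = 2 * (c 0 * c 6 - 6 * c 1 * c 5 + 15 * c 2 * c 4 - 10 * c 3 ^ 2) := rfl
  have Q1 : c 0 * c 7 - 5 * c 1 * c 6 + 9 * c 2 * c 5 - 5 * c 3 * c 4 = 0 := k1
  have Q2 : 3 * kf c 2 = c 0 * c 8 - 2 * c 1 * c 7 - 8 * c 2 * c 6 + 34 * c 3 * c 5 - 25 * c 4 ^ 2 := by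
    simp only [kf]; field_simp
  have Q3 : c 1 * c 8 - 5 * c 2 * c 7 + 9 * c 3 * c 6 - 5 * c 4 * c 5 = 0 := k3
  have Q4 : 2 * (c 2 * c 8 - 6 * c 3 * c 7 + 15 * c 4 * c 6 - 10 * c 5 ^ 2) = 0 := k4
  generalize kf c 0 = e at *
  generalize kf c 2 = k at *
  generalize gf c 4 = g4 at *
  generalize gf c 6 = g6 at *
  generalize gf c 8 = g8 at *
  obtain ⟨m1, m7, m9, m8, m5⟩ := rel_consequences H R k2 (by rw [E4]; ring) (by rw [E6]; ring)
  clear R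
  generalize shJ2 (bform 8 c) = j2 at *
  generalize shJ3 (bform 8 c) = j3 at *
  generalize shJ4 (bform 8 c) = j4 at *
  generalize shJ5 (bform 8 c) = j5 at *
  generalize shJ6 (bform 8 c) = j6 at *
  generalize shJ7 (bform 8 c) = j7 at *
  generalize shJ8 (bform 8 c) = j8 at *
  generalize shJ9 (bform 8 c) = j9 at *
  have a8 : e ^ 2 * c 8 = 0 := by
    apply mul_left_cancel₀ (mul_ne_zero (mul_ne_zero h3 h3) (pow_ne_zero 2 k2))
    linear_combination (-1) * E9 + m9 - 2 * k * E7 + 2 * k * m7 - k ^ 2 * E5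
  have a6 : e * c 6 = 0 := by
    apply mul_left_cancel₀ (mul_ne_zero (mul_ne_zero h2 (mul_ne_zero h3 h3)) (pow_ne_zero 2 k2))
    linear_combination (-1) * E7 + m7 - k * E5 - 3 * k * a8
  have b5 : j5 = 36 * k ^ 2 * c 4 := by
    linear_combination E5 + a8 + 12 * k * a6
  have b2 : j2 = 6 * k + 120 * c 4 ^ 2 := by
    apply mul_left_cancel₀ (mul_ne_zero (mul_ne_zero h2 (pow_ne_zero 3 h3)) (pow_ne_zero 4 k2))
    rw [b5] at m5
    linear_combination -m5
  have b3 : j3 = 6 * c 4 * (3 * k + 40 * c 4 ^ 2) := by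
    apply mul_left_cancel₀ (mul_ne_zero (mul_ne_zero h2 (pow_ne_zero 2 h3)) (pow_ne_zero 2 k2))
    rw [b5, b2] at m1
    linear_combination -m1
  by_cases he : e = 0
  · subst he
    have b8 : 35 * g4 = 3 * k + 70 * c 4 ^ 2 := by
      apply mul_left_cancel₀ (mul_ne_zero (mul_ne_zero (pow_ne_zero 2 h2) (pow_ne_zero 2 h3))
        (pow_ne_zero 3 k2))
      rw [b2] at m8
      linear_combination 35 * E8 - m8
    have d1 : c 1 * c 7 = c 2 * c 6 + 5 * (c 3 * c 5) := by
      apply mul_left_cancel₀ (mul_ne_zero h2 h7)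
      linear_combination b8 - G4 + Q2
    have d2 : c 2 * c 6 = 4 * (c 3 * c 5) := by
      apply mul_left_cancel₀ (mul_ne_zero (mul_ne_zero h2 h2) (mul_ne_zero h3 h5))
      linear_combination b2 - E2 + 2 * Q2 + 12 * d1
    obtain ⟨z1, z2, z3, z5, z6, z7⟩ := coreA H (c 0) (c 1) (c 2) (c 3) (c 4) (c 5) (c 6) (c 7) (c 8)
      (c 3 * c 5) (by linear_combination d1 + d2) d2 rfl
      (by apply mul_left_cancel₀ h2; linear_combination -Q0) Q1 Q3
      (by apply mul_left_cancel₀ h2; linear_combination Q4)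
      (by linear_combination b3 - E3 + 6 * c 4 * Q2 - 84 * c 4 * (d1 + d2) + 84 * c 4 * d2)
      (by rw [← Q2]; exact mul_ne_zero h3 k2) s0 s8
    exact scaling h.sqf z1 z2 z3 z5 z6 z7
  · exfalso
    have z6 : c 6 = 0 := by simpa [he] using a6
    have z8 : c 8 = 0 := by simpa [he] using a8
    have n7 := s8 z8
    simp only [z6, z8] at E2 E3 G4 G6 G8 Q0 Q1 Q2 Q3 Q4
    refine L0_bad H (c 0) (c 1) (c 2) (c 3) (c 4) (c 5) (c 7) e k j2 j3 g4 g6 g8 n7 he k2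
      (by linear_combination Q0) (by linear_combination Q1) (by linear_combination Q2)
      (by apply mul_left_cancel₀ h5; linear_combination -Q3)
      (by apply mul_left_cancel₀ h2; apply mul_left_cancel₀ h2; linear_combination -Q4) b2
      (by linear_combination E2) b3 (by linear_combination E3) (by linear_combination G4)
      (by linear_combination G6) (by linear_combination G8)
      (by linear_combination m8 - 35 * E8)

lemma L1 (H : CharOK K) {c : ℕ → K} (h : Good (bform 8 c)) (k0 : kf c 0 = 0) (k2 : kf c 2 = 0)
    (k3 : kf c 3 = 0) (k4 : kf c 4 = 0) (k1 : kf c 1 ≠ 0) : False := by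
  have h2 := H.h2
  have R : D8rel _ _ _ _ _ _ _ _ _ := h.rel
  obtain ⟨m5, m7, m9, -⟩ := rel_zero H R (by rw [J4_bform H, k0, k2, k3, k4]; ring)
  have E7 := J7_bform H c
  have E9 := J9_bform H c
  have f0 : hf4 (kf c) 0 = -2 * kf c 1 ^ 2 := by simp only [hf4, k0]; ring
  have f1 : hf4 (kf c) 1 = 0 := by simp only [hf4, k0, k2]; ring
  have f2 : hf4 (kf c) 2 = 0 := by simp only [hf4, k0, k2, k3]; ring
  have f3 : hf4 (kf c) 3 = 0 := by simp only [hf4, k2, k4]; ring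
  have f4 : hf4 (kf c) 4 = 0 := by simp only [hf4, k2, k3]; ring
  simp only [f0, f1, f2, f3, f4, k0, k2, k3, k4, mf, m7, m9] at E7 E9
  have z8 : c 8 = 0 := by
    apply mul_left_cancel₀ (mul_ne_zero (pow_ne_zero 2 h2) (pow_ne_zero 4 k1))
    linear_combination -E9
  have z7 : c 7 = 0 := by
    apply mul_left_cancel₀ (mul_ne_zero (pow_ne_zero 3 h2) (pow_ne_zero 3 k1))
    linear_combination -E7
  exact sqf_ne78 h.sqf z8 z7

/-- coefficients of the diagonal form used below -/
def dc (a b c : K) : ℕ → K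
  | 0 => a
  | 4 => b
  | 8 => c
  | _ => 0

/-- The special octic with vanishing quartic covariant. -/
lemma special [IsAlgClosed K] (H : CharOK K) {c : ℕ → K} (h : Squarefree (bform 8 c)) {v B : K}
    (hv : v ≠ 0) (hB : B ≠ 0) (z0 : c 0 = 0) (z1 : c 1 = -50 * B ^ 2 * v) (z2 : c 2 = 0)
    (z3 : c 3 = 0) (z4 : c 4 = 2 * B * v) (z5 : c 5 = 0) (z6 : c 6 = 0) (z7 : c 7 = v)
    (z8 : c 8 = 0) : Eqv (bform 8 c) := by
  have h2 := H.h2; have h3 := H.h3; have h5 := H.h5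
  obtain ⟨s, hs⟩ := IsAlgClosed.exists_pow_nat_eq (-2 / (5 * B)) (n := 3) (by norm_num)
  obtain ⟨r, hr⟩ := IsAlgClosed.exists_pow_nat_eq (3 : K) (n := 2) (by norm_num)
  have hs' : 5 * B * s ^ 3 + 2 = 0 := by rw [hs]; field_simp; ring
  have ns : s ≠ 0 := by
    rintro rfl; apply h2; linear_combination hs'
  have nr : r ≠ 0 := by
    rintro rfl; apply h3; rw [← hr]; ring
  have hM : (!![s * (1 + r), s * (1 - r); 2, 2] : Matrix (Fin 2) (Fin 2) K).det ≠ 0 := by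
    rw [Matrix.det_fin_two_of,
      show s * (1 + r) * 2 - s * (1 - r) * 2 = 2 * 2 * (s * r) by ring]
    exact mul_ne_zero (mul_ne_zero h2 h2) (mul_ne_zero ns nr)
  have h4 : ∃ d, 70 * d = -8 * v * s * 16 * (-1512) :=
    ⟨-8 * v * s * 16 * (-1512) / 70, by
      have : (70 : K) ≠ 0 := by
        rw [show (70 : K) = 2 * 35 by norm_num]; exact mul_ne_zero h2 H.h35
      field_simp⟩
  obtain ⟨d, hd⟩ := h4
  have key : lsub !![s * (1 + r), s * (1 - r); 2, 2] (bform 8 c) =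
      bform 8 (dc (-8 * v * s * 16 * (756 + 432 * r)) d (-8 * v * s * 16 * (756 - 432 * r))) := by
    rw [bform8, bform8, z0, z1, z2, z3, z4, z5, z6, z7, z8]
    simp only [lsub_add, lsub_mul, lsub_pow, lsub_C, lsub_X, lsub_n4, lsub_n6, lsub_n8,
      lsub_n28, lsub_n56, lsub_n70]
    have Cr := congrArg (C : K → MvPolynomial (Fin 2) K) hr
    have Cs := congrArg (C : K → MvPolynomial (Fin 2) K) hs'
    have Cd := congrArg (C : K → MvPolynomial (Fin 2) K) hd
    simp [dc, map_ofNat] at Cr Cs Cd ⊢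
    generalize (C r : MvPolynomial (Fin 2) K) = r at *
    generalize (C s : MvPolynomial (Fin 2) K) = s at *
    generalize (C d : MvPolynomial (Fin 2) K) = d at *
    generalize (C v : MvPolynomial (Fin 2) K) = v at *
    generalize (C B : MvPolynomial (Fin 2) K) = B at *
    generalize (X 0 : MvPolynomial (Fin 2) K) = P at *
    generalize (X 1 : MvPolynomial (Fin 2) K) = Q at *
    have e1 : 8 * (-(50 * B ^ 2 * v)) * ((s * ((1 + r) * P + (1 - r) * Q)) ^ 7 * (2 * (P + Q))) +
        70 * (2 * B * v) * ((s * ((1 + r) * P + (1 - r) * Q)) ^ 4 * (2 * (P + Q)) ^ 4) +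
        8 * v * ((s * ((1 + r) * P + (1 - r) * Q)) * (2 * (P + Q)) ^ 7) =
        -8 * v * s * (8 * ((1 + r) * P + (1 - r) * Q) ^ 7 * (2 * (P + Q)) +
          7 * ((1 + r) * P + (1 - r) * Q) ^ 4 * (2 * (P + Q)) ^ 4 -
          ((1 + r) * P + (1 - r) * Q) * (2 * (P + Q)) ^ 7) := by
      generalize (1 + r) * P + (1 - r) * Q = x
      generalize 2 * (P + Q) = z
      linear_combination v * (-16 * s * (5 * B * s ^ 3 - 2) * (x ^ 7 * z) +
        28 * s * (x ^ 4 * z ^ 4)) * Cs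
    have e2 : 8 * ((1 + r) * P + (1 - r) * Q) ^ 7 * (2 * (P + Q)) +
          7 * ((1 + r) * P + (1 - r) * Q) ^ 4 * (2 * (P + Q)) ^ 4 -
          ((1 + r) * P + (1 - r) * Q) * (2 * (P + Q)) ^ 7 =
          16 * (756 * (P ^ 4 - Q ^ 4) ^ 2 + 432 * r * (P ^ 8 - Q ^ 8)) := by
      have e3 : ∀ x D : MvPolynomial (Fin 2) K, 8 * (x + r * D) ^ 7 * (2 * x) +
          7 * (x + r * D) ^ 4 * (2 * x) ^ 4 - (x + r * D) * (2 * x) ^ 7 =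
          16 * (189 * x ^ 2 * D ^ 2 * (x ^ 2 + D ^ 2) ^ 2 +
            27 * r * x * D * (x ^ 6 + 7 * x ^ 4 * D ^ 2 + 7 * x ^ 2 * D ^ 4 + D ^ 6)) := by
        intro x D
        linear_combination (16 * x * (63 * x ^ 5 * D ^ 2 + 63 * x ^ 4 * r * D ^ 3 +
          (42 * x ^ 3 * D ^ 4 + 21 * x ^ 2 * r * D ^ 5) * (r ^ 2 + 3) +
          (7 * x * D ^ 6 + r * D ^ 7) * (r ^ 4 + 3 * r ^ 2 + 9))) * Cr
      have e4 := e3 (P + Q) (P - Q)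
      linear_combination e4
    rw [e2] at e1
    linear_combination e1 - P ^ 4 * Q ^ 4 * Cd
  apply Eqv.of_lsub hM
  have hsq := lsub_sqf hM h
  rw [key] at hsq ⊢
  exact scaling hsq rfl rfl rfl rfl rfl rfl

lemma L2a [IsAlgClosed K] (H : CharOK K) {c : ℕ → K} (h : Good (bform 8 c)) (k1 : kf c 1 = 0)
    (k2 : kf c 2 = 0) (k3 : kf c 3 = 0) (k4 : kf c 4 = 0) (z8 : c 8 = 0) (z6 : c 6 = 0) :
    Eqv (bform 8 c) := by
  have h2 := H.h2; have h3 := H.h3; have h5 := H.h5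
  have R : D8rel _ _ _ _ _ _ _ _ _ := h.rel
  obtain ⟨-, -, -, hR⟩ := rel_zero H R (by rw [J4_bform H, k1, k2, k3, k4]; ring)
  have s0 := sqf_ne01 h.sqf
  have hv := sqf_ne78 h.sqf z8
  rw [J2_bform H, J3_bform H] at hR
  have Q2 : 3 * kf c 2 = c 0 * c 8 - 2 * c 1 * c 7 - 8 * c 2 * c 6 + 34 * c 3 * c 5 - 25 * c 4 ^ 2 := by
    simp only [kf]; field_simp
  rw [k2] at Q2
  have Q1 : c 0 * c 7 - 5 * c 1 * c 6 + 9 * c 2 * c 5 - 5 * c 3 * c 4 = 0 := k1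
  have Q3 : c 1 * c 8 - 5 * c 2 * c 7 + 9 * c 3 * c 6 - 5 * c 4 * c 5 = 0 := k3
  have Q4 : 2 * (c 2 * c 8 - 6 * c 3 * c 7 + 15 * c 4 * c 6 - 10 * c 5 ^ 2) = 0 := k4
  simp only [z6, z8] at hR Q1 Q2 Q3 Q4
  obtain ⟨v, ev⟩ : ∃ v, c 7 = v := ⟨_, rfl⟩
  rw [ev] at hv
  obtain ⟨u, hu⟩ : ∃ u, c 5 = 3 * u * v := ⟨c 5 / (3 * v), by field_simp⟩
  obtain ⟨b, hb⟩ : ∃ b, c 4 = 2 * b * v := ⟨c 4 / (2 * v), by field_simp⟩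
  simp only [ev, hu, hb] at hR Q1 Q2 Q3 Q4
  have e3 : c 3 = -15 * v * u ^ 2 := by
    apply mul_left_cancel₀ hv; apply mul_left_cancel₀ (mul_ne_zero (mul_ne_zero h2 h2) h3)
    linear_combination -Q4
  have e2 : c 2 = -6 * v * b * u := by
    apply mul_left_cancel₀ hv; apply mul_left_cancel₀ h5; linear_combination -Q3
  rw [e2, e3] at Q1
  have e0 : c 0 = 12 * v * b * u ^ 2 := by
    apply mul_left_cancel₀ hv; linear_combination Q1
  rw [e3] at Q2
  have e1 : c 1 = v * (-765 * u ^ 3 - 50 * b ^ 2) := by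
    apply mul_left_cancel₀ hv; apply mul_left_cancel₀ h2; linear_combination Q2
  rw [e0, e1, e2, e3] at hR
  have hw : u ^ 3 * (16 * u ^ 3 + b ^ 2) ^ 2 = 0 := by
    apply mul_left_cancel₀ (mul_ne_zero (pow_ne_zero 4 h2) (mul_ne_zero
      (pow_ne_zero 3 (mul_ne_zero (mul_ne_zero (pow_ne_zero 3 h2) (pow_ne_zero 3 h3)) h5))
      (pow_ne_zero 6 hv)))
    linear_combination -hR
  rcases mul_eq_zero.1 hw with hu0 | hw0
  · have u0 : u = 0 := pow_eq_zero_iff (three_ne_zero) |>.1 hu0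
    subst u0
    have hb0 : b ≠ 0 := by
      rintro rfl
      apply s0
      · rw [e0]; ring
      · rw [e1]; ring
    exact special H h.sqf hv hb0 (by rw [e0]; ring) (by rw [e1]; ring) (by rw [e2]; ring)
      (by rw [e3]; ring) hb (by rw [hu]; ring) z6 ev z8
  · have w0 : 16 * u ^ 3 + b ^ 2 = 0 := pow_eq_zero_iff (two_ne_zero) |>.1 hw0
    exfalso
    by_cases u0 : u = 0
    · subst u0
      have hb0 : b = 0 := by
        apply pow_eq_zero_iff (two_ne_zero) |>.1; linear_combination w0
      subst hb0
      apply s0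
      · rw [e0]; ring
      · rw [e1]; ring
    obtain ⟨t, ht⟩ : ∃ t, b = 4 * u * t := ⟨b / (4 * u), by
      have : (4 : K) ≠ 0 := by
        rw [show (4 : K) = 2 * 2 by norm_num]; exact mul_ne_zero h2 h2
      field_simp⟩
    have hut : u = - t ^ 2 := by
      apply mul_left_cancel₀ (pow_ne_zero 2 u0)
      apply mul_left_cancel₀ (pow_ne_zero 4 h2)
      rw [ht] at w0
      linear_combination w0
    subst ht
    subst hut
    have hunit : IsUnit (C t * X 0 + X 1 : MvPolynomial (Fin 2) K) := by
      apply h.sqf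
      refine ⟨8 * C v * X 0 * (C t * X 0 + X 1) ^ 4 * (X 1 - 6 * C t * X 0), ?_⟩
      rw [bform8, e0, e1, e2, e3, hb, hu, z6, ev, z8]
      simp [map_ofNat]
      ring
    have := hunit.map (constantCoeff : MvPolynomial (Fin 2) K →+* K)
    simp at this

lemma L2 [IsAlgClosed K] (H : CharOK K) {c : ℕ → K} (h : Good (bform 8 c)) (k1 : kf c 1 = 0)
    (k2 : kf c 2 = 0) (k3 : kf c 3 = 0) (k4 : kf c 4 = 0) (z8 : c 8 = 0) : Eqv (bform 8 c) := by
  have hv := sqf_ne78 h.sqf z8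
  have h2 := H.h2
  obtain ⟨c', g, hc, hk, he⟩ := shear H h (-c 6 / (2 * c 7))
  apply he
  apply L2a H g
  · rw [hk 1 (by norm_num)]; simp [sh4, k1, k2, k3, k4]
  · rw [hk 2 (by norm_num)]; simp [sh4, k1, k2, k3, k4]
  · rw [hk 3 (by norm_num)]; simp [sh4, k1, k2, k3, k4]
  · rw [hk 4 (by norm_num)]; simp [sh4, k1, k2, k3, k4]
  · rw [hc 8 (by norm_num)]; simp [sh8, z8]
  · rw [hc 6 (by norm_num)]; simp only [sh8, z8]; field_simp; ring

lemma L2b [IsAlgClosed K] (H : CharOK K) {c : ℕ → K} (h : Good (bform 8 c)) (k1 : kf c 1 = 0)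
    (k2 : kf c 2 = 0) (k3 : kf c 3 = 0) (k4 : kf c 4 = 0) : Eqv (bform 8 c) := by
  by_cases k0 : kf c 0 = 0
  · have hz : bform 4 (kf c) = 0 := by
      rw [bform4, k0, k1, k2, k3, k4]; simp
    obtain ⟨M, hM, hev⟩ := exists_root_move (K := K) (n := 8) (by norm_num) c
    obtain ⟨c', e1, g, e2, he⟩ := move H h M hM
    have hz' : bform 4 (kf c') = bform 4 (fun _ => 0) := by
      rw [← e2, hz, bform4]
      have : lsub M 0 = 0 := by simp [lsub]
      rw [this]; simp
    apply he
    apply L2 H g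
    · exact bform_inj H.f4 hz' 1 (by norm_num)
    · exact bform_inj H.f4 hz' 2 (by norm_num)
    · exact bform_inj H.f4 hz' 3 (by norm_num)
    · exact bform_inj H.f4 hz' 4 (by norm_num)
    · rw [← eval_bform 8 c', ← e1]; exact hev
  · have R : D8rel _ _ _ _ _ _ _ _ _ := h.rel
    obtain ⟨m5, -⟩ := rel_zero H R (by rw [J4_bform H, k1, k2, k3, k4]; ring)
    rw [J5_bform H, k1, k2, k3, k4] at m5
    simp only [mf, k1, k2, k3, k4] at m5
    apply L2 H h k1 k2 k3 k4
    apply mul_left_cancel₀ (pow_ne_zero 2 k0)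
    linear_combination m5

lemma L3 [IsAlgClosed K] (H : CharOK K) {c : ℕ → K} (h : Good (bform 8 c))
    (k3 : kf c 3 = 0) (k4 : kf c 4 = 0) : Eqv (bform 8 c) := by
  have h2 := H.h2; have h3 := H.h3
  by_cases k2 : kf c 2 = 0
  · by_cases k1 : kf c 1 = 0
    · exact L2b H h k1 k2 k3 k4
    · exfalso
      obtain ⟨c', g, hc, hk, he⟩ := shear H h (-kf c 0 / (2 * 2 * kf c 1))
      apply L1 H g
      · rw [hk 0 (by norm_num)]; simp only [sh4, k2, k3, k4]; field_simp; ring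
      · rw [hk 2 (by norm_num)]; simp [sh4, k2, k3, k4]
      · rw [hk 3 (by norm_num)]; simp [sh4, k2, k3, k4]
      · rw [hk 4 (by norm_num)]; simp [sh4, k2, k3, k4]
      · rw [hk 1 (by norm_num)]; simpa [sh4, k2, k3, k4] using k1
  · obtain ⟨c', g, hc, hk, he⟩ := shear H h (-kf c 1 / (3 * kf c 2))
    apply he
    apply L0 H g
    · rw [hk 1 (by norm_num)]; simp only [sh4, k3, k4]; field_simp; ring
    · rw [hk 3 (by norm_num)]; simp [sh4, k3, k4]
    · rw [hk 4 (by norm_num)]; simp [sh4, k3, k4]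
    · rw [hk 2 (by norm_num)]; simpa [sh4, k3, k4] using k2

lemma L3s [IsAlgClosed K] (H : CharOK K) {c : ℕ → K} (h : Good (bform 8 c))
    (k0 : kf c 0 = 0) (k1 : kf c 1 = 0) : Eqv (bform 8 c) := by
  obtain ⟨c', g, hk, he⟩ := swap H h
  apply he
  apply L3 H g
  · rw [hk 3 (by norm_num)]; exact k1
  · rw [hk 4 (by norm_num)]; exact k0

lemma L4a [IsAlgClosed K] (H : CharOK K) {c : ℕ → K} (h : Good (bform 8 c))
    (k2 : kf c 2 = 0) (k4 : kf c 4 = 0) (k3 : kf c 3 ≠ 0) : Eqv (bform 8 c) := by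
  have h2 := H.h2; have h3 := H.h3
  have R : D8rel _ _ _ _ _ _ _ _ _ := h.rel
  have hD := rel_disc H R
  rw [J4_bform H, J6_bform H] at hD
  simp only [hf4, k2, k4] at hD
  have hD' : 64 * kf c 1 ^ 3 = -27 * kf c 0 ^ 2 * kf c 3 := by
    apply mul_left_cancel₀ (mul_ne_zero (pow_ne_zero 3 h2) (pow_ne_zero 3 k3))
    linear_combination -hD
  by_cases k1 : kf c 1 = 0
  · have k0 : kf c 0 = 0 := by
      rw [k1] at hD'
      have : kf c 0 ^ 2 = 0 := by
        apply mul_left_cancel₀ (mul_ne_zero (pow_ne_zero 3 h3) k3)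
        linear_combination hD'
      exact pow_eq_zero_iff (two_ne_zero) |>.1 this
    exact L3s H h k0 k1
  · obtain ⟨r, hr⟩ : ∃ r, 8 * kf c 1 * r = -3 * kf c 0 := ⟨-3 * kf c 0 / (2 ^ 3 * kf c 1), by
      field_simp; ring⟩
    have hr2 : kf c 1 + 3 * r ^ 2 * kf c 3 = 0 := by
      apply mul_left_cancel₀ (mul_ne_zero (pow_ne_zero 6 h2) (pow_ne_zero 2 k1))
      linear_combination hD' + 3 * kf c 3 * (8 * kf c 1 * r - 3 * kf c 0) * hr
    obtain ⟨c', g, hc, hk, he⟩ := shear H h r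
    apply he
    apply L3s H g
    · rw [hk 0 (by norm_num)]; simp only [sh4, k2, k4]
      apply mul_left_cancel₀ h3
      linear_combination 4 * r * hr2 + hr
    · rw [hk 1 (by norm_num)]; simp only [sh4, k2, k4]
      linear_combination hr2

lemma L4 [IsAlgClosed K] (H : CharOK K) {c : ℕ → K} (h : Good (bform 8 c))
    (k4 : kf c 4 = 0) : Eqv (bform 8 c) := by
  have h2 := H.h2
  by_cases k3 : kf c 3 = 0
  · exact L3 H h k3 k4
  · obtain ⟨c', g, hc, hk, he⟩ := shear H h (-kf c 2 / (2 * kf c 3))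
    apply he
    apply L4a H g
    · rw [hk 2 (by norm_num)]; simp only [sh4, k4]; field_simp; ring
    · rw [hk 4 (by norm_num)]; simp [sh4, k4]
    · rw [hk 3 (by norm_num)]; simpa [sh4, k4] using k3

lemma L5 [IsAlgClosed K] (H : CharOK K) {f : MvPolynomial (Fin 2) K} (h : Good f) : Eqv f := by
  obtain ⟨c, rfl⟩ := exists_bform H.f8 h.hom
  obtain ⟨M, hM, hev⟩ := exists_root_move (K := K) (n := 4) (by norm_num) (kf c)
  obtain ⟨c', e1, g, e2, he⟩ := move H h M hM
  apply he
  apply L4 H g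
  rw [← eval_bform 4 (kf c'), ← e2, map_mul, hev, mul_zero]

end Proof

/-- Identification of and reconstruction in the stratum `C₂ × D₈`: a squarefree binary octic
`f` over an algebraically closed field of characteristic `0` or `≥ 11` is
`GL₂(K)`-equivalent to some `X⁸ + a·X⁴Z⁴ + Z⁸` (i.e. the automorphism group of the genus-3
curve `y² = f(x,1)` contains `C₂ × D₈`) iff its Shioda invariants satisfy the nine relations
of `D8rel`.  Moreover, in that case `f` is `GL₂(K)`-equivalent to
`X⁸ + a₄·X⁴Z⁴ + a₀·Z⁸` with `a₀ = −a₄²/140 + j₂/2` and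
`a₄ = 35·(j₅j₂+6j₄j₃)/(2j₂³−60j₃²)` if `30·j₃² ≠ j₂³`, while `a₄ = 35·j₅/(3·j₄)` if
`30·j₃² = j₂³` and `j₄ ≠ 0`. -/
theorem statement19 {K : Type*} [Field K] [IsAlgClosed K]
    (hchar : ringChar K = 0 ∨ 11 ≤ ringChar K)
    (f : MvPolynomial (Fin 2) K) (hf : f.IsHomogeneous 8) (hsf : Squarefree f) :
    ((∃ (a : K) (M : Matrix (Fin 2) (Fin 2) K), IsUnit M.det ∧
        f = bind₁ (fun j : Fin 2 => C (M j 0) * X 0 + C (M j 1) * X 1)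
          (X 0 ^ 8 + C a * X 0 ^ 4 * X 1 ^ 4 + X 1 ^ 8)) ↔
      D8rel (shJ2 f) (shJ3 f) (shJ4 f) (shJ5 f) (shJ6 f) (shJ7 f) (shJ8 f) (shJ9 f)
        (shJ10 f)) ∧
    (D8rel (shJ2 f) (shJ3 f) (shJ4 f) (shJ5 f) (shJ6 f) (shJ7 f) (shJ8 f) (shJ9 f)
        (shJ10 f) →
      (30 * shJ3 f ^ 2 ≠ shJ2 f ^ 3 →
        ∃ M : Matrix (Fin 2) (Fin 2) K, IsUnit M.det ∧
          f = bind₁ (fun j : Fin 2 => C (M j 0) * X 0 + C (M j 1) * X 1)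
            (X 0 ^ 8 + C (a4gen (shJ2 f) (shJ3 f) (shJ4 f) (shJ5 f)) * X 0 ^ 4 * X 1 ^ 4 +
              C (a0of (shJ2 f) (a4gen (shJ2 f) (shJ3 f) (shJ4 f) (shJ5 f))) * X 1 ^ 8)) ∧
      (30 * shJ3 f ^ 2 = shJ2 f ^ 3 → shJ4 f ≠ 0 →
        ∃ M : Matrix (Fin 2) (Fin 2) K, IsUnit M.det ∧
          f = bind₁ (fun j : Fin 2 => C (M j 0) * X 0 + C (M j 1) * X 1)
            (X 0 ^ 8 + C (a4spec (shJ4 f) (shJ5 f)) * X 0 ^ 4 * X 1 ^ 4 +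
              C (a0of (shJ2 f) (a4spec (shJ4 f) (shJ5 f))) * X 1 ^ 8))) := by
  have H := charOK_of (K := K) hchar
  exact final_of H f (fun hr => L5 H ⟨hf, hsf, hr⟩)
end
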